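/- arXiv:math/0405482 — 2 statements merged into one kernel-verified Lean document; each statement's English description precedes it below -/
import Mathlib

section
/- For every n ≥ 1 and every bijection σ : Fin n → Fin n, there exists a triple diagram without closed strands realizing σ; that is, all n! pairings of the n 'in' boundary points with the n 'out' boundary points are achievable by triple diagrams consisting only of arcs. -/
open Set Metric Real
open scoped RealInnerProductSpace

noncomputable section

/-- The Euclidean plane. -/
abbrev Plane : Type := EuclideanSpace ℝ (Fin 2)

/-- The point of the unit circle at angle `θ`. -/
def unitPt (θ : ℝ) : Plane := (WithLp.equiv 2 (Fin 2 → ℝ)).symm ![Real.cos θ, Real.sin θ]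

/-- The `2n` marked boundary points `v_k = (cos (kπ/n), sin (kπ/n))`. -/
def bpoint (n k : ℕ) : Plane := unitPt (k * Real.pi / n)

/-- The underlying geometric data of a diagram in the closed unit disk:
`na` smooth immersed arcs with endpoints on the boundary circle (transverse to it,
pairwise distinct endpoints, interior in the open disk) and `nl` smooth immersed
loops (1-periodic) contained in the open disk. -/
structure PreDiagram (na nl : ℕ) where
  arc : Fin na → ℝ → Plane
  loop : Fin nl → ℝ → Plane
  arc_smooth : ∀ i, ContDiff ℝ (⊤ : ℕ∞) (arc i)
  loop_smooth : ∀ i, ContDiff ℝ (⊤ : ℕ∞) (loop i)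
  loop_periodic : ∀ i, Function.Periodic (loop i) 1
  arc_immersed : ∀ i, ∀ t ∈ Icc (0:ℝ) 1, deriv (arc i) t ≠ 0
  loop_immersed : ∀ i t, deriv (loop i) t ≠ 0
  arc_in_disk : ∀ i, ∀ t ∈ Icc (0:ℝ) 1, ‖arc i t‖ ≤ 1
  arc_interior : ∀ i, ∀ t ∈ Ioo (0:ℝ) 1, ‖arc i t‖ < 1
  arc_start_bdry : ∀ i, ‖arc i 0‖ = 1
  arc_end_bdry : ∀ i, ‖arc i 1‖ = 1
  arc_transverse_start : ∀ i, ⟪deriv (arc i) 0, arc i 0⟫ ≠ 0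
  arc_transverse_end : ∀ i, ⟪deriv (arc i) 1, arc i 1⟫ ≠ 0
  loop_in_disk : ∀ i t, ‖loop i t‖ < 1
  endpoints_distinct :
    Function.Injective (Sum.elim (fun i => arc i 0) (fun i => arc i 1) :
      Fin na ⊕ Fin na → Plane)

variable {na nl : ℕ}

/-- The passages of the strands of a diagram through the point `p`: parameter values
(with the strand they belong to) mapping to `p`.  For arcs the relevant parameters lie in
`(0,1)`; for loops we take one period `[0,1)`. -/
def PreDiagram.passages (D : PreDiagram na nl) (p : Plane) :
    Set ((Fin na × ℝ) ⊕ (Fin nl × ℝ)) :=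
  Sum.elim (fun q => q.2 ∈ Ioo (0:ℝ) 1 ∧ D.arc q.1 q.2 = p)
           (fun q => q.2 ∈ Ico (0:ℝ) 1 ∧ D.loop q.1 q.2 = p)

/-- The (forward) tangent vector of the branch through a given passage. -/
def PreDiagram.tangent (D : PreDiagram na nl) :
    (Fin na × ℝ) ⊕ (Fin nl × ℝ) → Plane :=
  Sum.elim (fun q => deriv (D.arc q.1) q.2) (fun q => deriv (D.loop q.1) q.2)

/-- A multiple point: a point traversed more than once by the strands,
counting with multiplicity in the parameters. -/
def PreDiagram.IsMultiplePoint (D : PreDiagram na nl) (p : Plane) : Prop :=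
  ¬ (D.passages p).Subsingleton

/-- A triple diagram: a diagram whose set of multiple points is finite, such that through
each multiple point exactly three branches pass, with pairwise linearly independent
tangent vectors, and such that at each such triple point the six tangent rays of the
three branches alternate between outgoing and incoming in cyclic order (equivalently,
some positive combination of the three forward tangent vectors vanishes). -/
structure TripleDiagram (na nl : ℕ) extends PreDiagram na nl where
  multiple_finite : {p : Plane | toPreDiagram.IsMultiplePoint p}.Finite
  triple : ∀ p : Plane, toPreDiagram.IsMultiplePoint p →
    (toPreDiagram.passages p).ncard = 3
  branches_transverse : ∀ p : Plane, toPreDiagram.IsMultiplePoint p →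
    ∀ q₁ ∈ toPreDiagram.passages p, ∀ q₂ ∈ toPreDiagram.passages p, q₁ ≠ q₂ →
      LinearIndependent ℝ ![toPreDiagram.tangent q₁, toPreDiagram.tangent q₂]
  alternating : ∀ p : Plane, toPreDiagram.IsMultiplePoint p →
    ∃ q₁ q₂ q₃, toPreDiagram.passages p = {q₁, q₂, q₃} ∧
      ∃ a b c : ℝ, 0 < a ∧ 0 < b ∧ 0 < c ∧
        a • toPreDiagram.tangent q₁ + b • toPreDiagram.tangent q₂ +
          c • toPreDiagram.tangent q₃ = 0

/-- The number of triple points of a triple diagram. -/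
def TripleDiagram.tripleCount (D : TripleDiagram na nl) : ℕ :=
  {p : Plane | D.toPreDiagram.IsMultiplePoint p}.ncard

/-- A triple diagram (with `n` arcs) realizes the bijection `σ` if its `i`-th arc runs from
the 'in' point `v_{2i}` to the 'out' point `v_{2σ(i)+1}`. -/
def Realizes {n nl : ℕ} (D : TripleDiagram n nl) (σ : Equiv.Perm (Fin n)) : Prop :=
  ∀ i : Fin n, D.arc i 0 = bpoint n (2 * (i : ℕ)) ∧ D.arc i 1 = bpoint n (2 * (σ i : ℕ) + 1)

/-- `N(σ)`: the number of ordered pairs `(i,j)`, `i ≠ j`, such that with `a = 2i`, `b = 2j`,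
`c = 2σ(i)+1`, `d = 2σ(j)+1` in `{0,…,2n−1}`, either `a < b < c < d` or `d < c < b < a`. -/
def Ncross (n : ℕ) (σ : Equiv.Perm (Fin n)) : ℕ :=
  (Finset.univ.filter fun ij : Fin n × Fin n =>
    ij.1 ≠ ij.2 ∧
      ((2 * (ij.1 : ℕ) < 2 * (ij.2 : ℕ) ∧
        2 * (ij.2 : ℕ) < 2 * (σ ij.1 : ℕ) + 1 ∧
        2 * (σ ij.1 : ℕ) + 1 < 2 * (σ ij.2 : ℕ) + 1) ∨
       (2 * (σ ij.2 : ℕ) + 1 < 2 * (σ ij.1 : ℕ) + 1 ∧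
        2 * (σ ij.1 : ℕ) + 1 < 2 * (ij.2 : ℕ) ∧
        2 * (ij.2 : ℕ) < 2 * (ij.1 : ℕ)))).card

end

namespace TD

/-- A smooth step with the value `1/2` exactly at `1/2`. -/
noncomputable def S (t : ℝ) : ℝ := Real.smoothTransition t

lemma S_smooth : ContDiff ℝ (⊤ : ℕ∞) S := Real.smoothTransition.contDiff

lemma S_zero {t : ℝ} (h : t ≤ 0) : S t = 0 := Real.smoothTransition.zero_of_nonpos h
lemma S_one {t : ℝ} (h : 1 ≤ t) : S t = 1 := Real.smoothTransition.one_of_one_le h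
lemma S_nonneg (t : ℝ) : 0 ≤ S t := Real.smoothTransition.nonneg t
lemma S_le_one (t : ℝ) : S t ≤ 1 := Real.smoothTransition.le_one t

lemma glue_lt {a b : ℝ} (h : a < b) (hb : 0 < b) : expNegInvGlue a < expNegInvGlue b := by
  by_cases ha : a ≤ 0
  · rw [expNegInvGlue.zero_of_nonpos ha]; exact expNegInvGlue.pos_of_pos hb
  · push Not at ha
    simp only [expNegInvGlue, not_le.2 ha, not_le.2 hb, if_false]
    apply Real.exp_lt_exp.2
    have := (inv_lt_inv₀ hb ha).2 h
    linarith

lemma S_lt {t : ℝ} (h : t < 1 / 2) : S t < 1 / 2 := by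
  have hp := Real.smoothTransition.pos_denom t
  have := glue_lt (show t < 1 - t by linarith) (by linarith)
  unfold S Real.smoothTransition
  rw [div_lt_iff₀ hp]; linarith

lemma S_gt {t : ℝ} (h : 1 / 2 < t) : 1 / 2 < S t := by
  have hp := Real.smoothTransition.pos_denom t
  have := glue_lt (show 1 - t < t by linarith) (by linarith)
  unfold S Real.smoothTransition
  rw [lt_div_iff₀ hp]; linarith

lemma S_half {t : ℝ} : S t = 1 / 2 ↔ t = 1 / 2 := by
  constructor
  · intro h
    rcases lt_trichotomy t (1 / 2) with h1 | h1 | h1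
    · have := S_lt h1; linarith
    · exact h1
    · have := S_gt h1; linarith
  · rintro rfl
    have hp := Real.smoothTransition.pos_denom (1 / 2)
    unfold S Real.smoothTransition
    rw [div_eq_iff hp.ne']
    norm_num; ring

lemma S_deriv : HasDerivAt S 2 (1 / 2) := by
  have h1 : HasDerivAt expNegInvGlue (Real.exp (-(1 / 2 : ℝ)⁻¹) * 4) (1 / 2) := by
    have h : HasDerivAt (fun x : ℝ => Real.exp (-x⁻¹)) (Real.exp (-(1 / 2 : ℝ)⁻¹) * 4) (1 / 2) := by
      have := ((hasDerivAt_inv (show (1 / 2 : ℝ) ≠ 0 by norm_num)).neg).exp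
      convert this using 1
      simp only [Pi.neg_apply]
      norm_num
    refine h.congr_of_eventuallyEq ?_
    filter_upwards [lt_mem_nhds (show (0 : ℝ) < 1 / 2 by norm_num)] with x hx
    simp [expNegInvGlue, not_le.2 hx]
  have h1' : HasDerivAt expNegInvGlue (Real.exp (-(1 / 2 : ℝ)⁻¹) * 4) (1 - 1 / 2) := by
    convert h1 using 1; norm_num
  have h2 := h1'.comp (1 / 2) ((hasDerivAt_id (1 / 2 : ℝ)).const_sub 1)
  have hp := Real.smoothTransition.pos_denom (1 / 2)
  have h3 : HasDerivAt S _ (1 / 2) := h1.div (h1.add h2) hp.ne'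
  have hv : expNegInvGlue (1 / 2) = Real.exp (-(1 / 2 : ℝ)⁻¹) := by
    simp only [expNegInvGlue]; norm_num
  convert h3 using 1
  have e : (1 : ℝ) - 1 / 2 = 1 / 2 := by norm_num
  simp only [e, hv]
  have := Real.exp_pos (-(1 / 2 : ℝ)⁻¹)
  field_simp
  ring

/-- A family of `n` wires (graphs of functions of time) starting at the even positions
`2 i` and ending at `2 τ i`, meeting each other or an odd position only in transverse
pairs at an odd position. -/
structure Wires (n : ℕ) (τ : Equiv.Perm (Fin n)) (T : ℝ) (F : Fin n → ℝ → ℝ) : Prop where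
  pos : 0 < T
  smooth : ∀ i, ContDiff ℝ (⊤ : ℕ∞) (F i)
  start : ∀ i t, t ≤ 0 → F i t = 2 * (i : ℕ)
  final : ∀ i t, T ≤ t → F i t = 2 * (τ i : ℕ)
  nonneg : ∀ i t, 0 ≤ F i t
  le : ∀ i t, F i t ≤ 2 * n - 2
  cross : ∀ i j t, i ≠ j → F i t = F j t → ∃ k : Fin n, F i t = 2 * (k : ℕ) + 1
  partner : ∀ i t (k : Fin n), F i t = 2 * (k : ℕ) + 1 → ∃ j, j ≠ i ∧ F j t = F i t ∧
    ∃ d : ℝ, d ≠ 0 ∧ HasDerivAt (F i) d t ∧ HasDerivAt (F j) (-d) t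
  two : ∀ i j l t, i ≠ j → F i t = F j t → F l t = F i t → l = i ∨ l = j
  fin : {t | ∃ i, ∃ k : Fin n, F i t = 2 * (k : ℕ) + 1}.Finite

lemma even_ne_odd {a b : ℕ} : (2 * (a : ℝ)) ≠ 2 * (b : ℝ) + 1 := by
  intro h
  have : 2 * a = 2 * b + 1 := by exact_mod_cast h
  omega

lemma even_inj {n : ℕ} {a b : Fin n} (h : (2 * ((a : ℕ) : ℝ)) = 2 * ((b : ℕ) : ℝ)) : a = b := by
  have : 2 * (a : ℕ) = 2 * (b : ℕ) := by exact_mod_cast h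
  exact Fin.ext (by omega)

lemma fin_le {n : ℕ} (a : Fin n) : (2 * ((a : ℕ) : ℝ)) ≤ 2 * n - 2 := by
  have : (((a : ℕ) + 1 : ℕ) : ℝ) ≤ n := by exact_mod_cast a.2
  push_cast at this; linarith

lemma wires_one (n : ℕ) : Wires n 1 1 (fun i _ => 2 * (i : ℕ)) where
  pos := one_pos
  smooth i := contDiff_const
  start i t _ := rfl
  final i t _ := rfl
  nonneg i t := by positivity
  le i t := fin_le i
  cross i j t hij h := absurd (even_inj h) hij
  partner i t k h := absurd h even_ne_odd
  two i j l t hij h := absurd (even_inj h) hij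
  fin := by
    convert Set.finite_empty
    ext t
    simp only [Set.mem_ofPred_eq, mem_empty_iff_false, iff_false]
    rintro ⟨i, k, h⟩
    exact even_ne_odd h

/-- coefficient of the elementary swap -/
noncomputable def co {m : ℕ} (k : Fin m) (a : Fin (m + 1)) : ℝ :=
  if a = k.castSucc then 1 else if a = k.succ then -1 else 0

noncomputable def swapF {m : ℕ} (k : Fin m) (a : Fin (m + 1)) (t : ℝ) : ℝ :=
  2 * (a : ℕ) + 2 * co k a * S t

lemma swapF_cases {m : ℕ} (k : Fin m) (a : Fin (m + 1)) :
    (a = k.castSucc ∧ ∀ t, swapF k a t = 2 * (k : ℕ) + 2 * S t) ∨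
    (a = k.succ ∧ ∀ t, swapF k a t = 2 * (k : ℕ) + 2 - 2 * S t) ∨
    (a ≠ k.castSucc ∧ a ≠ k.succ ∧ ((a : ℕ) + 1 ≤ k ∨ (k : ℕ) + 2 ≤ a) ∧
      ∀ t, swapF k a t = 2 * (a : ℕ)) := by
  by_cases h1 : a = k.castSucc
  · left
    refine ⟨h1, fun t => ?_⟩
    subst h1
    simp [swapF, co]
  · by_cases h2 : a = k.succ
    · right; left
      refine ⟨h2, fun t => ?_⟩
      subst h2
      simp only [swapF, co, h1, if_false, if_true, Fin.val_succ]
      push_cast; ring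
    · right; right
      refine ⟨h1, h2, ?_, fun t => by simp [swapF, co, h1, h2]⟩
      rw [Fin.ext_iff] at h1 h2
      simp at h1 h2
      omega

lemma swapF_meet {m : ℕ} (k : Fin m) {a b : Fin (m + 1)} {t : ℝ} (hab : a ≠ b)
    (h : swapF k a t = swapF k b t) :
    t = 1 / 2 ∧ ((a = k.castSucc ∧ b = k.succ) ∨ (a = k.succ ∧ b = k.castSucc)) := by
  have h0 := S_nonneg t
  have h1 := S_le_one t
  rcases swapF_cases k a with ⟨ha, ea⟩ | ⟨ha, ea⟩ | ⟨ha, ha', hc, ea⟩ <;>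
  rcases swapF_cases k b with ⟨hb, eb⟩ | ⟨hb, eb⟩ | ⟨hb, hb', hd, eb⟩ <;>
  rw [ea, eb] at h
  · exact absurd (ha.trans hb.symm) hab
  · exact ⟨S_half.1 (by linarith), Or.inl ⟨ha, hb⟩⟩
  · exfalso
    rcases hd with hd | hd
    · have : (((b : ℕ) + 1 : ℕ) : ℝ) ≤ (k : ℕ) := by exact_mod_cast hd
      push_cast at this; linarith
    · have : (((k : ℕ) + 2 : ℕ) : ℝ) ≤ (b : ℕ) := by exact_mod_cast hd
      push_cast at this; linarith
  · exact ⟨S_half.1 (by linarith), Or.inr ⟨ha, hb⟩⟩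
  · exact absurd (ha.trans hb.symm) hab
  · exfalso
    rcases hd with hd | hd
    · have : (((b : ℕ) + 1 : ℕ) : ℝ) ≤ (k : ℕ) := by exact_mod_cast hd
      push_cast at this; linarith
    · have : (((k : ℕ) + 2 : ℕ) : ℝ) ≤ (b : ℕ) := by exact_mod_cast hd
      push_cast at this; linarith
  · exfalso
    rcases hc with hd | hd
    · have : (((a : ℕ) + 1 : ℕ) : ℝ) ≤ (k : ℕ) := by exact_mod_cast hd
      push_cast at this; linarith
    · have : (((k : ℕ) + 2 : ℕ) : ℝ) ≤ (a : ℕ) := by exact_mod_cast hd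
      push_cast at this; linarith
  · exfalso
    rcases hc with hd | hd
    · have : (((a : ℕ) + 1 : ℕ) : ℝ) ≤ (k : ℕ) := by exact_mod_cast hd
      push_cast at this; linarith
    · have : (((k : ℕ) + 2 : ℕ) : ℝ) ≤ (a : ℕ) := by exact_mod_cast hd
      push_cast at this; linarith
  · exact absurd (even_inj h) hab

lemma swapF_odd {m : ℕ} (k : Fin m) {a l : Fin (m + 1)} {t : ℝ}
    (h : swapF k a t = 2 * (l : ℕ) + 1) :
    t = 1 / 2 ∧ (a = k.castSucc ∨ a = k.succ) := by
  have h0 := S_nonneg t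
  have h1 := S_le_one t
  have key : ∀ s : ℝ, 0 ≤ s → s ≤ 1 → 2 * ((k : ℕ) : ℝ) + 2 * s = 2 * ((l : ℕ) : ℝ) + 1 →
      s = 1 / 2 := by
    intro s hs hs' e
    have e1 : ((l : ℕ) : ℝ) < ((k : ℕ) + 1 : ℕ) := by push_cast; linarith
    have e2 : ((k : ℕ) : ℝ) < ((l : ℕ) + 1 : ℕ) := by push_cast; linarith
    have e1' : (l : ℕ) < (k : ℕ) + 1 := by exact_mod_cast e1
    have e2' : (k : ℕ) < (l : ℕ) + 1 := by exact_mod_cast e2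
    have : (k : ℕ) = (l : ℕ) := by omega
    rw [this] at e
    linarith
  rcases swapF_cases k a with ⟨ha, ea⟩ | ⟨ha, ea⟩ | ⟨ha, ha', hc, ea⟩ <;> rw [ea] at h
  · exact ⟨S_half.1 (key _ h0 h1 h), Or.inl ha⟩
  · have := key (1 - S t) (by linarith) (by linarith) (by linarith)
    exact ⟨S_half.1 (by linarith), Or.inr ha⟩
  · exact absurd h even_ne_odd

lemma swapF_half_left {m : ℕ} (k : Fin m) :
    swapF k k.castSucc (1 / 2) = 2 * (k : ℕ) + 1 := by
  have : S (1 / 2) = 1 / 2 := S_half.2 rfl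
  simp only [swapF, co, if_true, this, Fin.val_castSucc]; ring

lemma swapF_half_right {m : ℕ} (k : Fin m) :
    swapF k k.succ (1 / 2) = 2 * (k : ℕ) + 1 := by
  have : S (1 / 2) = 1 / 2 := S_half.2 rfl
  rcases swapF_cases k k.succ with ⟨ha, ea⟩ | ⟨ha, ea⟩ | ⟨ha, ha', hc, ea⟩
  · rw [ea, this]; ring
  · rw [ea, this]; ring
  · exact absurd rfl ha'

lemma swapF_deriv {m : ℕ} (k : Fin m) (a : Fin (m + 1)) :
    HasDerivAt (swapF k a) (2 * co k a * 2) (1 / 2) :=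
  (S_deriv.const_mul (2 * co k a)).const_add _

lemma wires_swap {m : ℕ} (k : Fin m) :
    Wires (m + 1) (Equiv.swap k.castSucc k.succ) 1 (swapF k) where
  pos := one_pos
  smooth i := contDiff_const.add (contDiff_const.mul S_smooth)
  start i t ht := by simp [swapF, S_zero ht]
  final i t ht := by
    rcases swapF_cases k i with ⟨ha, ea⟩ | ⟨ha, ea⟩ | ⟨ha, ha', hc, ea⟩
    · rw [ea, S_one ht, ha, Equiv.swap_apply_left]; simp; ring
    · rw [ea, S_one ht, ha, Equiv.swap_apply_right]; simp
    · rw [ea, Equiv.swap_apply_of_ne_of_ne ha ha']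
  nonneg i t := by
    have h0 := S_nonneg t
    have h1 := S_le_one t
    have h2 : (0 : ℝ) ≤ (k : ℕ) := by positivity
    rcases swapF_cases k i with ⟨ha, ea⟩ | ⟨ha, ea⟩ | ⟨ha, ha', hc, ea⟩ <;> rw [ea]
    · linarith
    · linarith
    · positivity
  le i t := by
    have h0 := S_nonneg t
    have h1 := S_le_one t
    have h2 := fin_le k
    push_cast
    rcases swapF_cases k i with ⟨ha, ea⟩ | ⟨ha, ea⟩ | ⟨ha, ha', hc, ea⟩ <;> rw [ea]
    · linarith
    · linarith
    · have := fin_le i; push_cast at this; linarith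
  cross i j t hij h := by
    obtain ⟨rfl, h2⟩ := swapF_meet k hij h
    refine ⟨k.castSucc, ?_⟩
    rcases h2 with ⟨rfl, rfl⟩ | ⟨rfl, rfl⟩
    · rw [swapF_half_left]; simp
    · rw [swapF_half_right]; simp
  partner i t l h := by
    have hne : k.castSucc ≠ k.succ := (Fin.castSucc_lt_succ).ne
    obtain ⟨rfl, h2⟩ := swapF_odd k h
    have d1 := swapF_deriv k k.castSucc
    have d2 := swapF_deriv k k.succ
    simp only [co, if_true, hne.symm, if_false] at d1 d2
    rcases h2 with rfl | rfl
    · refine ⟨k.succ, hne.symm, by rw [swapF_half_left, swapF_half_right], 4, by norm_num, ?_, ?_⟩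
      · convert d1 using 1; norm_num
      · convert d2 using 1; norm_num
    · refine ⟨k.castSucc, hne, by rw [swapF_half_left, swapF_half_right], -4, by norm_num, ?_, ?_⟩
      · convert d2 using 1; norm_num
      · convert d1 using 1; norm_num
  two i j l t hij h h' := by
    obtain ⟨_, h⟩ := swapF_meet k hij h
    by_cases hl : l = i
    · exact Or.inl hl
    · obtain ⟨_, h'⟩ := swapF_meet k hl h'
      right
      rcases h with ⟨h1, h2⟩ | ⟨h1, h2⟩ <;> rcases h' with ⟨h3, h4⟩ | ⟨h3, h4⟩ <;> simp_all
  fin := by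
    refine (Set.finite_singleton (1 / 2 : ℝ)).subset ?_
    rintro t ⟨i, l, h⟩
    exact (swapF_odd k h).1

noncomputable def compF {n : ℕ} (τ : Equiv.Perm (Fin n)) (T : ℝ) (F G : Fin n → ℝ → ℝ) (i : Fin n) (t : ℝ) : ℝ :=
  F i t + (G (τ i) (t - T) - 2 * (τ i : ℕ))

lemma wires_comp {n : ℕ} {τ ρ : Equiv.Perm (Fin n)} {T U : ℝ} {F G : Fin n → ℝ → ℝ}
    (hF : Wires n τ T F) (hG : Wires n ρ U G) : Wires n (ρ * τ) (T + U) (compF τ T F G) := by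
  have hl : ∀ i t, t ≤ T → compF τ T F G i t = F i t := by
    intro i t ht
    simp [compF, hG.start (τ i) (t - T) (by linarith)]
  have hr : ∀ i t, T ≤ t → compF τ T F G i t = G (τ i) (t - T) := by
    intro i t ht
    simp [compF, hF.final i t ht]
  have hT : ∀ i, compF τ T F G i T = 2 * (τ i : ℕ) := by
    intro i
    rw [hl i T le_rfl, hF.final i T le_rfl]
  have hτ : ∀ {i j}, i ≠ j → τ i ≠ τ j := fun h h' => h (τ.injective h')
  have hpU := hG.pos
  have hpT := hF.pos
  constructor
  · linarith
  · intro i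
    exact (hF.smooth i).add ((((hG.smooth (τ i)).comp (contDiff_id.sub contDiff_const))).sub
      contDiff_const)
  · intro i t ht
    rw [hl i t (by linarith), hF.start i t ht]
  · intro i t ht
    rw [hr i t (by linarith), hG.final _ _ (by linarith)]; rfl
  · intro i t
    rcases le_total t T with h | h
    · rw [hl i t h]; exact hF.nonneg i t
    · rw [hr i t h]; exact hG.nonneg _ _
  · intro i t
    rcases le_total t T with h | h
    · rw [hl i t h]; exact hF.le i t
    · rw [hr i t h]; exact hG.le _ _
  · intro i j t hij
    rcases le_total t T with h | h
    · rw [hl i t h, hl j t h]; exact hF.cross i j t hij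
    · rw [hr i t h, hr j t h]; exact hG.cross _ _ _ (hτ hij)
  · intro i t k hk
    rcases lt_trichotomy t T with h | h | h
    · rw [hl i t h.le] at hk
      obtain ⟨j, hj, e, d, hd, h1, h2⟩ := hF.partner i t k hk
      refine ⟨j, hj, by rw [hl i t h.le, hl j t h.le, e], d, hd, ?_, ?_⟩
      · refine h1.congr_of_eventuallyEq ?_
        filter_upwards [gt_mem_nhds h] with s hs using hl i s (le_of_lt hs)
      · refine h2.congr_of_eventuallyEq ?_
        filter_upwards [gt_mem_nhds h] with s hs using hl j s (le_of_lt hs)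
    · subst h
      rw [hT] at hk
      exact absurd hk even_ne_odd
    · rw [hr i t h.le] at hk
      obtain ⟨j, hj, e, d, hd, h1, h2⟩ := hG.partner _ _ k hk
      have hjj : τ (τ.symm j) = j := τ.apply_symm_apply j
      refine ⟨τ.symm j, ?_, ?_, d, hd, ?_, ?_⟩
      · rintro rfl; exact hj hjj.symm
      · rw [hr i t h.le, hr _ t h.le, hjj, e]
      · refine (h1.comp_sub_const t T).congr_of_eventuallyEq ?_
        filter_upwards [lt_mem_nhds h] with s hs using hr i s (le_of_lt hs)
      · refine (h2.comp_sub_const t T).congr_of_eventuallyEq ?_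
        filter_upwards [lt_mem_nhds h] with s hs
        rw [hr _ s (le_of_lt hs), hjj]
  · intro i j l t hij
    rcases le_total t T with h | h
    · rw [hl i t h, hl j t h, hl l t h]; exact hF.two i j l t hij
    · rw [hr i t h, hr j t h, hr l t h]
      intro h1 h2
      rcases hG.two _ _ _ _ (hτ hij) h1 h2 with h3 | h3
      · exact Or.inl (τ.injective h3)
      · exact Or.inr (τ.injective h3)
  · refine (hF.fin.union (hG.fin.image (fun t => t + T))).subset ?_
    rintro t ⟨i, k, hk⟩
    rcases le_total t T with h | h
    · rw [hl i t h] at hk; exact Or.inl ⟨i, k, hk⟩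
    · rw [hr i t h] at hk; exact Or.inr ⟨t - T, ⟨_, k, hk⟩, by ring⟩

lemma exists_wires (n : ℕ) (hn : 1 ≤ n) (σ : Equiv.Perm (Fin n)) : ∃ T F, Wires n σ T F := by
  obtain ⟨m, rfl⟩ : ∃ m, n = m + 1 := ⟨n - 1, by omega⟩
  have hσ : σ ∈ Submonoid.closure
      (Set.range fun i : Fin m => Equiv.swap i.castSucc i.succ) := by
    rw [Equiv.Perm.mclosure_swap_castSucc_succ]; trivial
  induction hσ using Submonoid.closure_induction with
  | mem x hx =>
    obtain ⟨k, rfl⟩ := hx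
    exact ⟨_, _, wires_swap k⟩
  | one => exact ⟨_, _, wires_one _⟩
  | mul x y _ _ hx hy =>
    obtain ⟨T, F, h⟩ := hx
    obtain ⟨U, G, h'⟩ := hy
    exact ⟨_, _, wires_comp h' h⟩

noncomputable def polar (n : ℕ) (x y : ℝ) : Plane :=
  WithLp.toLp 2 ![Real.exp (-y) * Real.cos (Real.pi / n * x), Real.exp (-y) * Real.sin (Real.pi / n * x)]

noncomputable def vec (n : ℕ) (x y a b : ℝ) : Plane :=
  WithLp.toLp 2 ![Real.exp (-y) * (-a * Real.cos (Real.pi / n * x) - b * Real.sin (Real.pi / n * x)),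
    Real.exp (-y) * (-a * Real.sin (Real.pi / n * x) + b * Real.cos (Real.pi / n * x))]

lemma polar_norm (n : ℕ) (x y : ℝ) : ‖polar n x y‖ = Real.exp (-y) := by
  rw [EuclideanSpace.norm_eq, Fin.sum_univ_two]
  simp only [polar, Matrix.cons_val_zero, Matrix.cons_val_one, Real.norm_eq_abs, sq_abs]
  rw [mul_pow, mul_pow, ← mul_add, Real.cos_sq_add_sin_sq, mul_one]
  exact Real.sqrt_sq (Real.exp_pos _).le

lemma vec_comb (n : ℕ) (x y a b a' b' r s : ℝ) :
    r • vec n x y a b + s • vec n x y a' b' = vec n x y (r * a + s * a') (r * b + s * b') := by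
  ext i
  fin_cases i <;> simp [vec] <;> ring

lemma vec_zero (n : ℕ) (x y : ℝ) : vec n x y 0 0 = 0 := by
  ext i
  fin_cases i <;> simp [vec]

lemma vec_eq_zero {n : ℕ} {x y a b : ℝ} (h : vec n x y a b = 0) : a = 0 ∧ b = 0 := by
  have h0 := congrArg (fun v : Plane => v 0) h
  have h1 := congrArg (fun v : Plane => v 1) h
  simp only [vec, Matrix.cons_val_zero, Matrix.cons_val_one, PiLp.zero_apply, mul_eq_zero,
    (Real.exp_pos _).ne', false_or] at h0 h1
  have h2 := Real.cos_sq_add_sin_sq (Real.pi / n * x)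
  constructor
  · linear_combination (-Real.cos (Real.pi / n * x)) * h0 - Real.sin (Real.pi / n * x) * h1 - a * h2
  · linear_combination (-Real.sin (Real.pi / n * x)) * h0 + Real.cos (Real.pi / n * x) * h1 - b * h2

lemma vec_indep {n : ℕ} {x y a b a' b' : ℝ} (h : a * b' - a' * b ≠ 0) :
    LinearIndependent ℝ ![vec n x y a b, vec n x y a' b'] := by
  rw [LinearIndependent.pair_iff]
  intro s t e
  rw [vec_comb] at e
  obtain ⟨e1, e2⟩ := vec_eq_zero e
  constructor
  · refine (mul_eq_zero.1 (?_ : s * (a * b' - a' * b) = 0)).resolve_right h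
    linear_combination b' * e1 - a' * e2
  · refine (mul_eq_zero.1 (?_ : t * (a * b' - a' * b) = 0)).resolve_right h
    linear_combination a * e2 - b * e1

lemma vec_inner (n : ℕ) (x y a b : ℝ) :
    ⟪vec n x y a b, polar n x y⟫ = -a * Real.exp (-y) ^ 2 := by
  rw [PiLp.inner_apply, Fin.sum_univ_two]
  simp only [vec, polar, Matrix.cons_val_zero, Matrix.cons_val_one, RCLike.inner_apply, conj_trivial]
  have h2 := Real.cos_sq_add_sin_sq (Real.pi / n * x)
  linear_combination (-a * Real.exp (-y) ^ 2) * h2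

lemma polar_deriv (n : ℕ) {x y : ℝ → ℝ} {a b t : ℝ} (hx : HasDerivAt x b t)
    (hy : HasDerivAt y a t) :
    HasDerivAt (fun t => polar n (x t) (y t)) (vec n (x t) (y t) a (Real.pi / n * b)) t := by
  have h1 : HasDerivAt (fun t => Real.exp (-y t)) (Real.exp (-y t) * -a) t := hy.neg.exp
  have h2 := (hx.const_mul (Real.pi / n)).cos
  have h3 := (hx.const_mul (Real.pi / n)).sin
  have h4 : HasDerivAt (fun t => (![Real.exp (-y t) * Real.cos (Real.pi / n * x t),
      Real.exp (-y t) * Real.sin (Real.pi / n * x t)] : Fin 2 → ℝ))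
      ![Real.exp (-y t) * (-a * Real.cos (Real.pi / n * x t) - (Real.pi / n * b) * Real.sin (Real.pi / n * x t)),
    Real.exp (-y t) * (-a * Real.sin (Real.pi / n * x t) + (Real.pi / n * b) * Real.cos (Real.pi / n * x t))] t := by
    rw [hasDerivAt_pi]
    intro i
    fin_cases i
    · simp only [Fin.zero_eta, Matrix.cons_val_zero]
      refine (h1.mul h2).congr_deriv ?_
      ring
    · simp only [Fin.mk_one, Matrix.cons_val_one, Matrix.cons_val_zero]
      refine (h1.mul h3).congr_deriv ?_
      ring
  exact (PiLp.hasFDerivAt_toLp (𝕜 := ℝ) 2 _).comp_hasDerivAt t h4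

lemma polar_smooth (n : ℕ) {x y : ℝ → ℝ} (hx : ContDiff ℝ (⊤ : ℕ∞) x)
    (hy : ContDiff ℝ (⊤ : ℕ∞) y) : ContDiff ℝ (⊤ : ℕ∞) (fun t => polar n (x t) (y t)) := by
  rw [contDiff_euclidean]
  intro i
  fin_cases i
  · exact (hy.neg.exp).mul ((contDiff_const.mul hx).cos)
  · exact (hy.neg.exp).mul ((contDiff_const.mul hx).sin)

lemma polar_inj {n : ℕ} (hn : 1 ≤ n) {x y x' y' : ℝ} (h0 : 0 ≤ x) (h1 : x ≤ 2 * n - 1)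
    (h0' : 0 ≤ x') (h1' : x' ≤ 2 * n - 1) (h : polar n x y = polar n x' y') :
    x = x' ∧ y = y' := by
  have hy : y = y' := by
    have := congrArg norm h
    rw [polar_norm, polar_norm, Real.exp_eq_exp] at this
    linarith
  refine ⟨?_, hy⟩
  subst hy
  have e0 := congrArg (fun v : Plane => v 0) h
  have e1 := congrArg (fun v : Plane => v 1) h
  simp only [polar, Matrix.cons_val_zero, Matrix.cons_val_one] at e0 e1
  have e0 := mul_left_cancel₀ (Real.exp_pos _).ne' e0
  have e1 := mul_left_cancel₀ (Real.exp_pos _).ne' e1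
  obtain ⟨k, hk⟩ := Real.Angle.angle_eq_iff_two_pi_dvd_sub.1 (Real.Angle.cos_sin_inj e0 e1)
  have hn' : (0 : ℝ) < n := by exact_mod_cast hn
  have hk' : x - x' = 2 * n * k := by
    have hp := Real.pi_pos
    field_simp at hk
    linarith
  have k1 : (k : ℝ) < 1 := by
    by_contra hc
    push Not at hc
    nlinarith
  have k2 : (-1 : ℝ) < k := by
    by_contra hc
    push Not at hc
    nlinarith
  have k1' : k < 1 := by exact_mod_cast k1
  have k2' : -1 < k := by exact_mod_cast k2
  have : k = 0 := by omega
  rw [this] at hk'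
  simp at hk'
  linarith

noncomputable def ys (t : ℝ) : ℝ := t * (1 - t)

lemma ys_deriv (t : ℝ) : HasDerivAt ys (1 - 2 * t) t := by
  have := (hasDerivAt_id t).mul ((hasDerivAt_id t).const_sub 1)
  refine this.congr_deriv ?_
  simp; ring

lemma ys_eq {t t' : ℝ} (h : ys t = ys t') : t = t' ∨ t = 1 - t' := by
  have : (t - t') * (t - (1 - t')) = 0 := by unfold ys at h; linarith
  rcases mul_eq_zero.1 this with h | h
  · left; linarith
  · right; linarith

section
variable {n : ℕ} {σ : Equiv.Perm (Fin n)} {T : ℝ} {F : Fin n → ℝ → ℝ}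

noncomputable def xs (T : ℝ) (F : Fin n → ℝ → ℝ) (i : Fin n) (t : ℝ) : ℝ :=
  F i (3 * T * t) + S (3 * t - 1)

lemma xs_lo (i : Fin n) {t : ℝ} (ht : t ≤ 1 / 3) : xs T F i t = F i (3 * T * t) := by
  simp [xs, S_zero (show 3 * t - 1 ≤ 0 by linarith)]

lemma xs_hi (h : Wires n σ T F) (i : Fin n) {t : ℝ} (ht : 1 / 3 ≤ t) :
    xs T F i t = 2 * (σ i : ℕ) + S (3 * t - 1) := by
  have := h.pos
  rw [xs, h.final i _ (by nlinarith)]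

lemma xs_out (h : Wires n σ T F) (i : Fin n) {t : ℝ} (ht : 2 / 3 ≤ t) :
    xs T F i t = 2 * (σ i : ℕ) + 1 := by
  rw [xs_hi h i (by linarith), S_one (by linarith)]

lemma xs_nonneg (h : Wires n σ T F) (i : Fin n) (t : ℝ) : 0 ≤ xs T F i t :=
  add_nonneg (h.nonneg _ _) (S_nonneg _)

lemma xs_le (h : Wires n σ T F) (i : Fin n) (t : ℝ) : xs T F i t ≤ 2 * n - 1 := by
  have := h.le i (3 * T * t)
  have := S_le_one (3 * t - 1)
  unfold xs; linarith

lemma xs_smooth (h : Wires n σ T F) (i : Fin n) : ContDiff ℝ (⊤ : ℕ∞) (xs T F i) :=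
  ((h.smooth i).comp (contDiff_const.mul contDiff_id)).add
    (S_smooth.comp ((contDiff_const.mul contDiff_id).sub contDiff_const))

lemma xs_deriv_half (h : Wires n σ T F) (i : Fin n) : HasDerivAt (xs T F i) 6 (1 / 2) := by
  have h1 : HasDerivAt (fun t : ℝ => 3 * t - 1) 3 (1 / 2) := by
    simpa using ((hasDerivAt_id (1 / 2 : ℝ)).const_mul 3).sub_const 1
  have h2 : HasDerivAt S 2 (3 * (1 / 2) - 1) := by
    convert S_deriv using 1; norm_num
  have h3 := (h2.comp (1 / 2) h1).const_add (2 * ((σ i : ℕ) : ℝ))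
  have h4 : HasDerivAt (xs T F i) (2 * 3) (1 / 2) := by
    refine h3.congr_of_eventuallyEq ?_
    filter_upwards [lt_mem_nhds (show (1 / 3 : ℝ) < 1 / 2 by norm_num)] with s hs
      using xs_hi h i (le_of_lt hs)
  convert h4 using 1; norm_num

lemma xs_deriv_lo (i : Fin n) {t d : ℝ} (ht : t < 1 / 3)
    (hd : HasDerivAt (F i) d (3 * T * t)) : HasDerivAt (xs T F i) (d * (3 * T)) t := by
  have h1 : HasDerivAt (fun t : ℝ => 3 * T * t) (3 * T) t := by
    simpa using (hasDerivAt_id t).const_mul (3 * T)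
  refine (hd.comp t h1).congr_of_eventuallyEq ?_
  filter_upwards [gt_mem_nhds ht] with s hs using xs_lo i (le_of_lt hs)

lemma xs_deriv_out (h : Wires n σ T F) (i : Fin n) {t : ℝ} (ht : 2 / 3 < t) :
    HasDerivAt (xs T F i) 0 t := by
  refine (hasDerivAt_const t (2 * ((σ i : ℕ) : ℝ) + 1)).congr_of_eventuallyEq ?_
  filter_upwards [lt_mem_nhds ht] with s hs using xs_out h i (le_of_lt hs)

lemma meet_aux (h : Wires n σ T F) {i j : Fin n} {t : ℝ} (ht : t ∈ Ioo (0 : ℝ) 1)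
    (hlt : t < 1 / 2) (hx : xs T F i t = xs T F j (1 - t)) :
    t < 1 / 3 ∧ F i (3 * T * t) = 2 * (σ j : ℕ) + 1 := by
  rcases lt_or_ge t (1 / 3) with h3 | h3
  · refine ⟨h3, ?_⟩
    rw [xs_lo i h3.le, xs_out h j (by linarith)] at hx
    exact hx
  · exfalso
    rw [xs_hi h i h3, xs_hi h j (by linarith)] at hx
    have a1 := S_lt (show 3 * t - 1 < 1 / 2 by linarith)
    have a2 := S_gt (show 1 / 2 < 3 * (1 - t) - 1 by linarith)
    have a3 := S_nonneg (3 * t - 1)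
    have a4 := S_le_one (3 * (1 - t) - 1)
    have b1 : ((σ j : ℕ) : ℝ) < (σ i : ℕ) := by linarith
    have b2 : (((σ i : ℕ)) : ℝ) < ((σ j : ℕ) + 1 : ℕ) := by push_cast; linarith
    have b1' : (σ j : ℕ) < (σ i : ℕ) := by exact_mod_cast b1
    have b2' : (σ i : ℕ) < (σ j : ℕ) + 1 := by exact_mod_cast b2
    omega

lemma meet (h : Wires n σ T F) {i j : Fin n} {t t' : ℝ} (ht : t ∈ Ioo (0 : ℝ) 1)
    (ht' : t' ∈ Ioo (0 : ℝ) 1) (hne : (i, t) ≠ (j, t'))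
    (hx : xs T F i t = xs T F j t') (hy : ys t = ys t') :
    ∃ a s, ∃ k : Fin n, 0 < s ∧ s < 1 / 3 ∧ F a (3 * T * s) = 2 * (k : ℕ) + 1 ∧
      xs T F i t = xs T F a s ∧ ys t = ys s := by
  rcases ys_eq hy with e | e
  · subst e
    have hij : i ≠ j := fun h => hne (by rw [h])
    rcases lt_or_ge t (1 / 3) with h3 | h3
    · have hx' := hx
      rw [xs_lo i h3.le, xs_lo j h3.le] at hx'
      obtain ⟨k, hk⟩ := h.cross i j _ hij hx'
      exact ⟨i, t, k, ht.1, h3, hk, rfl, rfl⟩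
    · rw [xs_hi h i h3, xs_hi h j h3] at hx
      exact absurd (σ.injective (even_inj (add_right_cancel hx))) hij
  · rcases lt_trichotomy t (1 / 2) with hl | hl | hl
    · have e' : t' = 1 - t := by linarith
      subst e'
      obtain ⟨h3, hk⟩ := meet_aux h ht hl hx
      exact ⟨i, t, _, ht.1, h3, hk, rfl, rfl⟩
    · have e' : t' = t := by linarith
      subst e'
      have hij : i ≠ j := fun h => hne (by rw [h])
      rw [xs_hi h i (by linarith), xs_hi h j (by linarith)] at hx
      exact absurd (σ.injective (even_inj (add_right_cancel hx))) hij
    · subst e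
      obtain ⟨h3, hk⟩ := meet_aux h ht' (by linarith) hx.symm
      exact ⟨j, t', _, ht'.1, h3, hk, hx, hy⟩

noncomputable def pre (hn : 1 ≤ n) (h : Wires n σ T F) : PreDiagram n 0 where
  arc i t := polar n (xs T F i t) (ys t)
  loop i := i.elim0
  arc_smooth i := polar_smooth n (xs_smooth h i) (contDiff_id.mul (contDiff_const.sub contDiff_id))
  loop_smooth i := i.elim0
  loop_periodic i := i.elim0
  loop_immersed i := i.elim0
  loop_in_disk i := i.elim0
  arc_immersed i t ht := by
    by_cases e : t = 1 / 2
    · subst e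
      rw [(polar_deriv n (xs_deriv_half h i) (ys_deriv _)).deriv]
      intro h0
      have := (vec_eq_zero h0).2
      have hn' : (0 : ℝ) < n := by exact_mod_cast hn
      have hp := Real.pi_pos
      have : 0 < Real.pi / n * 6 := by positivity
      linarith
    · have hd := ((xs_smooth h i).differentiable (by simp)).differentiableAt.hasDerivAt (x := t)
      rw [(polar_deriv n hd (ys_deriv _)).deriv]
      intro h0
      have := (vec_eq_zero h0).1
      exact e (by linarith)
  arc_in_disk i t ht := by
    rw [polar_norm, Real.exp_le_one_iff, ys]
    nlinarith [ht.1, ht.2]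
  arc_interior i t ht := by
    rw [polar_norm, Real.exp_lt_one_iff, ys]
    nlinarith [ht.1, ht.2]
  arc_start_bdry i := by rw [polar_norm]; simp [ys]
  arc_end_bdry i := by rw [polar_norm]; simp [ys]
  arc_transverse_start i := by
    have hd := ((xs_smooth h i).differentiable (by simp)).differentiableAt.hasDerivAt (x := (0 : ℝ))
    rw [(polar_deriv n hd (ys_deriv _)).deriv, vec_inner]
    have := Real.exp_pos (-ys 0)
    simp
  arc_transverse_end i := by
    have hd := ((xs_smooth h i).differentiable (by simp)).differentiableAt.hasDerivAt (x := (1 : ℝ))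
    rw [(polar_deriv n hd (ys_deriv _)).deriv, vec_inner]
    have := Real.exp_pos (-ys 1)
    norm_num
  endpoints_distinct := by
    have hs : ∀ i, xs T F i 0 = 2 * (i : ℕ) := fun i => by
      rw [xs_lo i (by norm_num), h.start i _ (by simp)]
    have he : ∀ i, xs T F i 1 = 2 * (σ i : ℕ) + 1 := fun i => xs_out h i (by norm_num)
    have hinj : ∀ i j t t', polar n (xs T F i t) (ys t) = polar n (xs T F j t') (ys t') →
        xs T F i t = xs T F j t' := fun i j t t' e =>
      (polar_inj hn (xs_nonneg h _ _) (xs_le h _ _) (xs_nonneg h _ _) (xs_le h _ _) e).1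
    rintro (i | i) (j | j) e
    · have := hinj _ _ _ _ e
      rw [hs, hs] at this
      rw [even_inj this]
    · have := hinj _ _ _ _ e
      rw [hs, he] at this
      exact absurd this even_ne_odd
    · have := hinj _ _ _ _ e
      rw [hs, he] at this
      exact absurd this.symm even_ne_odd
    · have := hinj _ _ _ _ e
      rw [he, he] at this
      rw [σ.injective (even_inj (add_right_cancel this))]

lemma mem_passages (hn : 1 ≤ n) (h : Wires n σ T F) (p : Plane) (i : Fin n) (t : ℝ) :
    Sum.inl (i, t) ∈ (pre hn h).passages p ↔
      t ∈ Ioo (0 : ℝ) 1 ∧ polar n (xs T F i t) (ys t) = p := Iff.rfl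

lemma polar_iff (hn : 1 ≤ n) (h : Wires n σ T F) {i j : Fin n} {t t' : ℝ} :
    polar n (xs T F i t) (ys t) = polar n (xs T F j t') (ys t') ↔
      xs T F i t = xs T F j t' ∧ ys t = ys t' :=
  ⟨fun e => polar_inj hn (xs_nonneg h _ _) (xs_le h _ _) (xs_nonneg h _ _) (xs_le h _ _) e,
    fun e => by rw [e.1, e.2]⟩

/-- The structure of multiple points. -/
lemma multiple (hn : 1 ≤ n) (h : Wires n σ T F) {p : Plane} (hp : (pre hn h).IsMultiplePoint p) :
    ∃ a b c s d α, 0 < s ∧ s < 1 / 3 ∧ a ≠ b ∧ d ≠ 0 ∧ 0 < α ∧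
      (∃ k : Fin n, F a (3 * T * s) = 2 * (k : ℕ) + 1) ∧
      p = polar n (xs T F a s) (ys s) ∧
      (pre hn h).passages p = {Sum.inl (a, s), Sum.inl (b, s), Sum.inl (c, 1 - s)} ∧
      ∃ x y, (pre hn h).tangent (Sum.inl (a, s)) = vec n x y α d ∧
        (pre hn h).tangent (Sum.inl (b, s)) = vec n x y α (-d) ∧
        (pre hn h).tangent (Sum.inl (c, 1 - s)) = vec n x y (-α) 0 := by
  obtain ⟨a, s, k, hs0, hs1, hk, hpp⟩ : ∃ a s, ∃ k : Fin n, 0 < s ∧ s < 1 / 3 ∧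
      F a (3 * T * s) = 2 * (k : ℕ) + 1 ∧ p = polar n (xs T F a s) (ys s) := by
    unfold PreDiagram.IsMultiplePoint at hp
    rw [Set.not_subsingleton_iff] at hp
    obtain ⟨q, hq, q', hq', hne⟩ := hp
    rcases q with ⟨i, t⟩ | ⟨l, _⟩
    · rcases q' with ⟨j, t'⟩ | ⟨l, _⟩
      · rw [mem_passages] at hq hq'
        obtain ⟨e1, e2⟩ := (polar_iff hn h).1 (hq.2.trans hq'.2.symm)
        obtain ⟨a, s, k, h1, h2, h3, h4, h5⟩ := meet h hq.1 hq'.1 (fun e => hne (by rw [e])) e1 e2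
        refine ⟨a, s, k, h1, h2, h3, ?_⟩
        rw [← hq.2, h4, h5]
      · exact l.elim0
    · exact l.elim0
  obtain ⟨b, hba, hb, d, hd, da, db⟩ := h.partner a _ k hk
  have xa := xs_lo (T := T) (F := F) a hs1.le
  have xb := xs_lo (T := T) (F := F) b hs1.le
  have xc := xs_out h (σ.symm k) (show 2 / 3 ≤ 1 - s by linarith)
  rw [Equiv.apply_symm_apply] at xc
  have hyc : ys (1 - s) = ys s := by unfold ys; ring
  have hxb : xs T F b s = xs T F a s := by rw [xa, xb, hb]
  have hxc : xs T F (σ.symm k) (1 - s) = xs T F a s := by rw [xa, xc, hk]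
  have hn' : (0 : ℝ) < n := by exact_mod_cast hn
  have hT := h.pos
  have hpi := Real.pi_pos
  refine ⟨a, b, σ.symm k, s, Real.pi / n * (d * (3 * T)), 1 - 2 * s, hs0, hs1, hba.symm, by positivity,
    by linarith, ⟨k, hk⟩, hpp, ?_, xs T F a s, ys s, ?_, ?_, ?_⟩
  · ext q
    rcases q with ⟨i, t⟩ | ⟨l, _⟩
    · rw [mem_passages, hpp, polar_iff hn h]
      simp only [Set.mem_insert_iff, Set.mem_singleton_iff, Sum.inl.injEq, Prod.mk.injEq]
      constructor
      · rintro ⟨ht, hx, hy⟩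
        rcases ys_eq hy with rfl | rfl
        · rw [xa, xs_lo i hs1.le] at hx
          rcases h.two a b i _ hba.symm hb.symm hx with rfl | rfl
          · exact Or.inl ⟨rfl, rfl⟩
          · exact Or.inr (Or.inl ⟨rfl, rfl⟩)
        · right; right
          refine ⟨?_, rfl⟩
          rw [xa, hk, xs_out h i (by linarith)] at hx
          rw [Equiv.eq_symm_apply]
          exact even_inj (add_right_cancel hx)
      · rintro (⟨rfl, rfl⟩ | ⟨rfl, rfl⟩ | ⟨rfl, rfl⟩)
        · exact ⟨⟨hs0, by linarith⟩, rfl, rfl⟩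
        · exact ⟨⟨hs0, by linarith⟩, hxb, rfl⟩
        · exact ⟨⟨by linarith, by linarith⟩, hxc, hyc⟩
    · exact l.elim0
  · exact (polar_deriv n (xs_deriv_lo a hs1 da) (ys_deriv s)).deriv
  · refine (polar_deriv n (xs_deriv_lo b hs1 db) (ys_deriv s)).deriv.trans ?_
    rw [hxb]; congr 1; ring
  · refine (polar_deriv n (xs_deriv_out h (σ.symm k) (show 2 / 3 < 1 - s by linarith))
      (ys_deriv (1 - s))).deriv.trans ?_
    rw [hxc, hyc]; congr 1 <;> ring

noncomputable def diag (hn : 1 ≤ n) (h : Wires n σ T F) : TripleDiagram n 0 where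
  toPreDiagram := pre hn h
  multiple_finite := by
    have hT := h.pos
    refine ((Set.finite_univ (α := Fin n)).prod h.fin |>.image
      (fun q => polar n (xs T F q.1 (q.2 / (3 * T))) (ys (q.2 / (3 * T))))).subset ?_
    intro p hp
    obtain ⟨a, b, c, s, d, α, h1, h2, h3, h4, h5, ⟨k, hk⟩, hpp, -⟩ := multiple hn h hp
    refine ⟨(a, 3 * T * s), ⟨Set.mem_univ _, a, k, hk⟩, ?_⟩
    have : 3 * T * s / (3 * T) = s := by field_simp
    simp only [this]
    exact hpp.symm
  triple := by
    intro p hp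
    obtain ⟨a, b, c, s, d, α, h1, h2, h3, h4, h5, -, -, he, -⟩ := multiple hn h hp
    rw [he, Set.ncard_eq_three]
    have hs : s ≠ 1 - s := by intro e; linarith
    refine ⟨_, _, _, ?_, ?_, ?_, rfl⟩ <;> simp [h3, hs]
  branches_transverse := by
    intro p hp
    obtain ⟨a, b, c, s, d, α, h1, h2, h3, h4, h5, -, -, he, x, y, ta, tb, tc⟩ := multiple hn h hp
    rw [he]
    have hαd : α * d ≠ 0 := mul_ne_zero h5.ne' h4
    rintro q₁ (rfl | rfl | rfl) q₂ (rfl | rfl | rfl) hne <;>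
      first
      | exact absurd rfl hne
      | (simp only [ta, tb, tc]
         apply vec_indep
         intro e
         apply hαd
         linarith)
  alternating := by
    intro p hp
    obtain ⟨a, b, c, s, d, α, h1, h2, h3, h4, h5, -, -, he, x, y, ta, tb, tc⟩ := multiple hn h hp
    refine ⟨_, _, _, he, 1, 1, 2, one_pos, one_pos, two_pos, ?_⟩
    rw [ta, tb, tc, vec_comb]
    have := vec_comb n x y (1 * α + 1 * α) (1 * d + 1 * -d) (-α) 0 1 2
    rw [one_smul] at this
    rw [this, ← vec_zero n x y]
    congr 1 <;> ring

lemma diag_realizes (hn : 1 ≤ n) (h : Wires n σ T F) : Realizes (diag hn h) σ := by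
  intro i
  have hs : xs T F i 0 = 2 * (i : ℕ) := by
    rw [xs_lo i (by norm_num), h.start i _ (by simp)]
  have he : xs T F i 1 = 2 * (σ i : ℕ) + 1 := xs_out h i (by norm_num)
  constructor
  · change polar n (xs T F i 0) (ys 0) = _
    rw [hs]
    simp only [polar, bpoint, unitPt, ys]
    push_cast
    rw [show Real.pi / n * (2 * ((i : ℕ) : ℝ)) = 2 * ((i : ℕ) : ℝ) * Real.pi / n by ring]
    simp
  · change polar n (xs T F i 1) (ys 1) = _
    rw [he]
    simp only [polar, bpoint, unitPt, ys]
    push_cast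
    rw [show Real.pi / n * (2 * ((σ i : ℕ) : ℝ) + 1) = (2 * ((σ i : ℕ) : ℝ) + 1) * Real.pi / n by ring]
    simp

end

end TD

/-- **Theorem (generation).** For every `n ≥ 1` and every bijection `σ : Fin n → Fin n`,
there is a triple diagram without closed strands (no loops) realizing `σ`: all `n!`
pairings of the 'in' boundary points with the 'out' boundary points are achievable by
triple diagrams consisting only of arcs. -/
theorem triple_diagram_generate (n : ℕ) (hn : 1 ≤ n) (σ : Equiv.Perm (Fin n)) :
    ∃ D : TripleDiagram n 0, Realizes D σ := by
  obtain ⟨T, F, h⟩ := TD.exists_wires n hn σ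
  exact ⟨TD.diag hn h, TD.diag_realizes hn h⟩
end

section
/- For every n ≥ 1 and every bijection σ : Fin n → Fin n, there exists a triple diagram without closed strands realizing σ whose number of triple points is exactly N(σ), where N(σ) is the number of ordered pairs (i, j) of indices with i ≠ j such that, writing a = 2i, b = 2j, c = 2σ(i)+1, d = 2σ(j)+1 as integers in {0,…,2n−1}, either a < b < c < d or d < c < b < a. -/
open Set Metric Real
open scoped RealInnerProductSpace

/-! ### Combinatorial part: schedules -/

/-- Positions are even integers in the admissible range. -/
def Rng {n : ℕ} (P : Fin n → ℤ) : Prop := ∀ j, Even (P j) ∧ 0 ≤ P j ∧ P j ≤ 2 * n - 2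

/-- The out-position of strand `j`. -/
def outp {n : ℕ} (σ : Equiv.Perm (Fin n)) (j : Fin n) : ℤ := 2 * ((σ j : ℕ) : ℤ) + 1

def MoveStep {n : ℕ} (σ : Equiv.Perm (Fin n)) (A : Finset (Fin n)) (P P' : Fin n → ℤ) : Prop :=
  ∃ q ∈ A, (∀ j ∈ A, j ≠ q → P' j = P j) ∧
    (∀ j ∈ A, j ≠ q → P j < min (P q) (P' q) ∨ max (P q) (P' q) < P j) ∧
    (∀ j ∈ A, outp σ j < min (P q) (P' q) ∨ max (P q) (P' q) < outp σ j)

def SwapStep {n : ℕ} (σ : Equiv.Perm (Fin n)) (A : Finset (Fin n)) (P P' : Fin n → ℤ) : Prop :=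
  ∃ p ∈ A, ∃ q ∈ A, ∃ o ∈ A, P p = outp σ o - 1 ∧ P q = outp σ o + 1 ∧
    P' p = outp σ o + 1 ∧ P' q = outp σ o - 1 ∧ (∀ j ∈ A, j ≠ p → j ≠ q → P' j = P j)

inductive Sched {n : ℕ} (σ : Equiv.Perm (Fin n)) :
    Finset (Fin n) → (Fin n → ℤ) → ℕ → Prop
  | nil (P : Fin n → ℤ) (h : Rng P) : Sched σ ∅ P 0
  | move (A : Finset (Fin n)) (P P' : Fin n → ℤ) (c : ℕ) (hr : Rng P) (hi : Set.InjOn P A)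
      (hm : MoveStep σ A P P') (hs : Sched σ A P' c) : Sched σ A P c
  | swap (A : Finset (Fin n)) (P P' : Fin n → ℤ) (c : ℕ) (hr : Rng P) (hi : Set.InjOn P A)
      (hm : SwapStep σ A P P') (hs : Sched σ A P' c) : Sched σ A P (c + 1)
  | cap (A : Finset (Fin n)) (P : Fin n → ℤ) (c : ℕ) (hr : Rng P) (hi : Set.InjOn P A)
      (i : Fin n) (hiA : i ∈ A) (hp : P i = outp σ i - 1 ∨ P i = outp σ i + 1)
      (hs : Sched σ (A.erase i) P c) : Sched σ A P c

/-- Position function of a state. -/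
def posw {n : ℕ} (w : Equiv.Perm (Fin n)) (j : Fin n) : ℤ := 2 * ((w j : ℕ) : ℤ)

theorem rng_posw {n : ℕ} (w : Equiv.Perm (Fin n)) : Rng (posw w) := by
  intro j
  have := (w j).2
  refine ⟨⟨((w j : ℕ) : ℤ), by unfold posw; ring⟩, by unfold posw; omega, by unfold posw; omega⟩

theorem posw_inj {n : ℕ} (w : Equiv.Perm (Fin n)) : Function.Injective (posw w) := by
  intro a b h
  unfold posw at h
  apply w.injective
  apply Fin.ext
  omega

theorem posw_ne {n : ℕ} (w : Equiv.Perm (Fin n)) {a b : Fin n} (h : a ≠ b) :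
    (w a : ℕ) ≠ (w b : ℕ) := fun e => h (w.injective (Fin.ext e))

/-- If `w = σ` off `A`, then `σ j`, `j ∈ A`, is hit by `w` on `A`. -/
theorem exists_w {n : ℕ} {σ w : Equiv.Perm (Fin n)} {A : Finset (Fin n)}
    (h : ∀ j, j ∉ A → w j = σ j) {j : Fin n} (hj : j ∈ A) : ∃ k ∈ A, w k = σ j := by
  refine ⟨w.symm (σ j), ?_, by simp⟩
  by_contra hk
  have h1 := h _ hk
  simp only [Equiv.apply_symm_apply] at h1
  have := σ.injective h1
  rw [← this] at hk
  exact hk hj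

theorem exists_s {n : ℕ} {σ w : Equiv.Perm (Fin n)} {A : Finset (Fin n)}
    (h : ∀ j, j ∉ A → w j = σ j) {j : Fin n} (hj : j ∈ A) : ∃ k ∈ A, σ k = w j :=
  exists_w (fun j hj => (h j hj).symm) hj

theorem sched_fixed {n : ℕ} {σ w : Equiv.Perm (Fin n)} {A : Finset (Fin n)} {c : ℕ} {i : Fin n}
    (hi : i ∈ A) (hw : w i = σ i) (hs : Sched σ (A.erase i) (posw w) c) :
    Sched σ A (posw w) c := by
  refine Sched.cap A _ c (rng_posw w) (posw_inj w).injOn i hi (Or.inl ?_) hs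
  unfold posw outp; rw [hw]; ring

/-- preliminary move of `q` next to the out line `w p`. -/
theorem move_q {n : ℕ} {σ w : Equiv.Perm (Fin n)} {A : Finset (Fin n)}
    (h : ∀ j, j ∉ A → w j = σ j) {p q : Fin n} (hq : q ∈ A)
    (hpq : (w p : ℕ) < w q) (hadj : ∀ k ∈ A, ¬ ((w p : ℕ) < w k ∧ (w k : ℕ) < w q)) :
    MoveStep σ A (posw w) (Function.update (posw w) q (posw w p + 2)) ∧
    Rng (Function.update (posw w) q (posw w p + 2)) ∧
    Set.InjOn (Function.update (posw w) q (posw w p + 2)) A := by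
  have hmin : min (posw w q) (posw w p + 2) = posw w p + 2 := by
    unfold posw; omega
  have hmax : max (posw w q) (posw w p + 2) = posw w q := by
    unfold posw; omega
  refine ⟨⟨q, hq, ?_, ?_, ?_⟩, ?_, ?_⟩
  · intro j _ hj; simp [hj]
  · intro j hj hjq
    simp only [Function.update_self, hmin, hmax]
    have := hadj j hj
    have := posw_ne w hjq
    unfold posw; omega
  · intro j hj
    simp only [Function.update_self, hmin, hmax]
    obtain ⟨k, hk, hk'⟩ := exists_w h hj
    have := hadj k hk
    rw [hk'] at this
    unfold posw outp; omega
  · intro j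
    by_cases hj : j = q
    · subst hj
      simp only [Function.update_self]
      have := rng_posw w p
      refine ⟨this.1.add (by decide), by omega, ?_⟩
      have := (w j).2
      unfold posw; omega
    · simp only [Function.update_of_ne hj]; exact rng_posw w j
  · have key : ∀ j ∈ A, j ≠ q → posw w j ≠ posw w p + 2 := by
      intro j hj hjq
      have := hadj j hj
      have := posw_ne w hjq
      unfold posw; omega
    intro a ha b hb hab
    by_cases h1 : a = q <;> by_cases h2 : b = q
    · rw [h1, h2]
    · subst h1; simp only [Function.update_self, Function.update_of_ne h2] at hab
      exact absurd hab.symm (key b hb h2)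
    · subst h2; simp only [Function.update_self, Function.update_of_ne h1] at hab
      exact absurd hab (key a ha h1)
    · simp only [Function.update_of_ne h1, Function.update_of_ne h2] at hab
      exact posw_inj w hab

theorem sched_free {n : ℕ} {σ w : Equiv.Perm (Fin n)} {A : Finset (Fin n)} {c : ℕ}
    (h : ∀ j, j ∉ A → w j = σ j) {p q : Fin n} (hp : p ∈ A) (hq : q ∈ A) (hpo : w p = σ q)
    (hpq : (w p : ℕ) < w q) (hadj : ∀ k ∈ A, ¬ ((w p : ℕ) < w k ∧ (w k : ℕ) < w q))
    (hs : Sched σ (A.erase q) (posw ((Equiv.swap p q).trans w)) c) : Sched σ A (posw w) c := by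
  obtain ⟨m1, r1, i1⟩ := move_q h hq hpq hadj
  have hne : p ≠ q := by rintro rfl; omega
  refine Sched.move A _ _ c (rng_posw w) (posw_inj w).injOn m1 ?_
  refine Sched.cap A _ c r1 i1 q hq (Or.inr ?_) ?_
  · simp only [Function.update_self]; unfold posw outp; rw [hpo]; ring
  refine Sched.move _ _ _ c r1 (i1.mono (by simp)) ?_ hs
  have e1 : posw ((Equiv.swap p q).trans w) p = posw w q := by simp [posw]
  have e2 : min (posw w p) (posw w q) = posw w p := by unfold posw; omega
  have e3 : max (posw w p) (posw w q) = posw w q := by unfold posw; omega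
  refine ⟨p, by simp [hp, hne], ?_, ?_, ?_⟩
  · intro j hj hjp
    have hjq : j ≠ q := (Finset.mem_erase.1 hj).1
    simp [posw, Equiv.swap_apply_of_ne_of_ne hjp hjq, hjq]
  · intro j hj hjp
    have hjq : j ≠ q := (Finset.mem_erase.1 hj).1
    simp only [Function.update_of_ne hjq, Function.update_of_ne hne, e1, e2, e3]
    have := hadj j (Finset.mem_erase.1 hj).2
    have := posw_ne w hjq
    have := posw_ne w hjp
    unfold posw; omega
  · intro j hj
    have hjq : j ≠ q := (Finset.mem_erase.1 hj).1
    simp only [Function.update_of_ne hne, e1, e2, e3]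
    obtain ⟨k, hk, hk'⟩ := exists_w h (Finset.mem_erase.1 hj).2
    have := hadj k hk
    rw [hk'] at this
    have := posw_ne σ hjq
    rw [← hpo] at this
    unfold posw outp; omega

theorem sched_swap {n : ℕ} {σ w : Equiv.Perm (Fin n)} {A : Finset (Fin n)} {c : ℕ}
    (h : ∀ j, j ∉ A → w j = σ j) {p q o : Fin n} (hp : p ∈ A) (hq : q ∈ A) (ho : o ∈ A)
    (hpo : w p = σ o)
    (hpq : (w p : ℕ) < w q) (hadj : ∀ k ∈ A, ¬ ((w p : ℕ) < w k ∧ (w k : ℕ) < w q))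
    (hs : Sched σ A (posw ((Equiv.swap p q).trans w)) c) : Sched σ A (posw w) (c + 1) := by
  obtain ⟨m1, r1, i1⟩ := move_q h hq hpq hadj
  have hne : p ≠ q := by rintro rfl; omega
  refine Sched.move A _ _ _ (rng_posw w) (posw_inj w).injOn m1 ?_
  set P1 := Function.update (posw w) q (posw w p + 2) with hP1
  have p1 : P1 p = posw w p := by simp [hP1, hne]
  have q1 : P1 q = posw w p + 2 := by simp [hP1]
  have k1 : ∀ k, k ≠ q → P1 k = posw w k := by intro k hk; simp [hP1, hk]
  have hout : outp σ o = posw w p + 1 := by unfold posw outp; rw [hpo]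
  set P2 := fun j => P1 (Equiv.swap p q j) with hP2
  have p2 : P2 p = posw w p + 2 := by simp [hP2, q1]
  have q2 : P2 q = posw w p := by simp [hP2, p1]
  have k2 : ∀ k, k ≠ p → k ≠ q → P2 k = posw w k := by
    intro k hk hk'; simp [hP2, Equiv.swap_apply_of_ne_of_ne hk hk', k1 k hk']
  refine Sched.swap A _ P2 _ r1 i1 ?_ ?_
  · refine ⟨p, hp, q, hq, o, ho, ?_, ?_, ?_, ?_, ?_⟩
    · rw [p1, hout]; ring
    · rw [q1, hout]; ring
    · rw [p2, hout]; ring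
    · rw [q2, hout]; ring
    · intro j _ h1 h2; rw [k2 j h1 h2, k1 j h2]
  have e1 : posw ((Equiv.swap p q).trans w) p = posw w q := by simp [posw]
  have e2 : min (posw w p + 2) (posw w q) = posw w p + 2 := by unfold posw; omega
  have e3 : max (posw w p + 2) (posw w q) = posw w q := by unfold posw; omega
  refine Sched.move A _ _ _ (fun j => r1 _) ?_ ?_ hs
  · intro a ha b hb hab
    have : ∀ x ∈ A, Equiv.swap p q x ∈ A := by
      intro x hx
      rcases eq_or_ne x p with rfl | h1
      · simpa using hq
      rcases eq_or_ne x q with rfl | h2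
      · simpa using hp
      rwa [Equiv.swap_apply_of_ne_of_ne h1 h2]
    exact (Equiv.swap p q).injective (i1 (this a ha) (this b hb) hab)
  · refine ⟨p, hp, ?_, ?_, ?_⟩
    · intro j hj hjp
      by_cases hjq : j = q
      · subst hjq; rw [q2]; simp [posw]
      · rw [k2 j hjp hjq]; simp [posw, Equiv.swap_apply_of_ne_of_ne hjp hjq]
    · intro j hj hjp
      rw [e1, p2, e2, e3]
      by_cases hjq : j = q
      · subst hjq; rw [q2]; left; omega
      · rw [k2 j hjp hjq]
        have := hadj j hj
        have := posw_ne w hjq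
        have := posw_ne w hjp
        unfold posw; omega
    · intro j hj
      rw [e1, p2, e2, e3]
      obtain ⟨k, hk, hk'⟩ := exists_w h hj
      have := hadj k hk
      rw [hk'] at this
      unfold posw outp; omega

/-- crossing indicator. -/
def cr (a c b d : ℕ) : ℤ :=
  if (a < b ∧ b ≤ c ∧ c < d) ∨ (d < c ∧ c < b ∧ b < a) then 1 else 0

theorem cr_one {a c b d : ℕ} (h : (a < b ∧ b ≤ c ∧ c < d) ∨ (d < c ∧ c < b ∧ b < a)) :
    cr a c b d = 1 := if_pos h

theorem cr_zero {a c b d : ℕ} (h : ¬ ((a < b ∧ b ≤ c ∧ c < d) ∨ (d < c ∧ c < b ∧ b < a))) :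
    cr a c b d = 0 := if_neg h

theorem cr_nonneg (a c b d : ℕ) : 0 ≤ cr a c b d := by unfold cr; split_ifs <;> simp

theorem cr_congr {a c b d a' c' b' d' : ℕ}
    (h : ((a < b ∧ b ≤ c ∧ c < d) ∨ (d < c ∧ c < b ∧ b < a)) ↔
      ((a' < b' ∧ b' ≤ c' ∧ c' < d') ∨ (d' < c' ∧ c' < b' ∧ b' < a'))) :
    cr a c b d = cr a' c' b' d' := by unfold cr; simp only [h]

theorem cr_left {a b c x y : ℕ} (h : a < b) (h1 : ¬ (a < x ∧ x < b)) (h2 : x ≠ a) (h3 : x ≠ b) :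
    cr b c x y = cr a c x y := cr_congr (by omega)

theorem cr_right {a b c x y : ℕ} (h : a < b) (h1 : ¬ (a < x ∧ x < b)) (h2 : x ≠ a) (h3 : x ≠ b)
    (h4 : ¬ (a < y ∧ y < b)) (h5 : y ≠ a) : cr x y b c = cr x y a c := cr_congr (by omega)

theorem cr_nine {a b c d x : ℕ} (hpq : a < b) (wop : x ≠ a) (woq : x ≠ b) (sop : a ≠ c)
    (soq : a ≠ d)
    (H : (b ≤ c ∧ (c < d ∨ d < a) ∧ (x < a ∨ c < x)) ∨
         (d < a ∧ (c < d ∨ b ≤ c) ∧ (x ≤ d ∨ b < x))) :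
    cr a c a c - cr b c b c + (cr a c b d - cr b c a d + (cr a c x a - cr b c x a)) +
      (cr b d a c - cr a d b c + (cr b d b d - cr a d a d + (cr b d x a - cr a d x a)) +
      (cr x a a c - cr x a b c + (cr x a b d - cr x a a d + (cr x a x a - cr x a x a)))) = 1 := by
  have z1 : cr a c a c = 0 := cr_zero (by omega)
  have z2 : cr b c b c = 0 := cr_zero (by omega)
  have z3 : cr b d b d = 0 := cr_zero (by omega)
  have z4 : cr a d a d = 0 := cr_zero (by omega)
  have z5 : cr x a x a = 0 := cr_zero (by omega)
  have z6 : cr b c a d = 0 := cr_zero (by omega)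
  have z7 : cr a d b c = 0 := cr_zero (by omega)
  have z8 : cr a c x a = 0 := cr_zero (by omega)
  have z9 : cr b c x a = 0 := cr_zero (by omega)
  have z10 : cr b d x a = 0 := cr_zero (by omega)
  have z11 : cr a d x a = 0 := cr_zero (by omega)
  rw [z1, z2, z3, z4, z5, z6, z7, z8, z9, z10, z11]
  rcases H with ⟨h1, h2 | h2, h3 | h3⟩ | ⟨h1, h2 | h2, h3 | h3⟩
  · rw [cr_one (a := a) (c := c) (b := b) (d := d) (by omega),
      cr_zero (a := b) (c := d) (b := a) (d := c) (by omega),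
      cr_one (a := x) (c := a) (b := a) (d := c) (by omega),
      cr_zero (a := x) (c := a) (b := b) (d := c) (by omega),
      cr_zero (a := x) (c := a) (b := b) (d := d) (by omega),
      cr_one (a := x) (c := a) (b := a) (d := d) (by omega)]; norm_num
  · rw [cr_one (a := a) (c := c) (b := b) (d := d) (by omega),
      cr_zero (a := b) (c := d) (b := a) (d := c) (by omega),
      cr_zero (a := x) (c := a) (b := a) (d := c) (by omega),
      cr_zero (a := x) (c := a) (b := b) (d := c) (by omega),
      cr_zero (a := x) (c := a) (b := b) (d := d) (by omega),
      cr_zero (a := x) (c := a) (b := a) (d := d) (by omega)]; norm_num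
  · rw [cr_zero (a := a) (c := c) (b := b) (d := d) (by omega),
      cr_zero (a := b) (c := d) (b := a) (d := c) (by omega),
      cr_one (a := x) (c := a) (b := a) (d := c) (by omega),
      cr_zero (a := x) (c := a) (b := b) (d := c) (by omega),
      cr_zero (a := x) (c := a) (b := b) (d := d) (by omega),
      cr_zero (a := x) (c := a) (b := a) (d := d) (by omega)]; norm_num
  · rw [cr_zero (a := a) (c := c) (b := b) (d := d) (by omega),
      cr_zero (a := b) (c := d) (b := a) (d := c) (by omega),
      cr_zero (a := x) (c := a) (b := a) (d := c) (by omega),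
      cr_zero (a := x) (c := a) (b := b) (d := c) (by omega),
      cr_one (a := x) (c := a) (b := b) (d := d) (by omega),
      cr_zero (a := x) (c := a) (b := a) (d := d) (by omega)]; norm_num
  · rw [cr_zero (a := a) (c := c) (b := b) (d := d) (by omega),
      cr_one (a := b) (c := d) (b := a) (d := c) (by omega),
      cr_zero (a := x) (c := a) (b := a) (d := c) (by omega),
      cr_zero (a := x) (c := a) (b := b) (d := c) (by omega),
      cr_zero (a := x) (c := a) (b := b) (d := d) (by omega),
      cr_zero (a := x) (c := a) (b := a) (d := d) (by omega)]; norm_num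
  · rw [cr_zero (a := a) (c := c) (b := b) (d := d) (by omega),
      cr_one (a := b) (c := d) (b := a) (d := c) (by omega),
      cr_zero (a := x) (c := a) (b := a) (d := c) (by omega),
      cr_one (a := x) (c := a) (b := b) (d := c) (by omega),
      cr_one (a := x) (c := a) (b := b) (d := d) (by omega),
      cr_zero (a := x) (c := a) (b := a) (d := d) (by omega)]; norm_num
  · rw [cr_zero (a := a) (c := c) (b := b) (d := d) (by omega),
      cr_zero (a := b) (c := d) (b := a) (d := c) (by omega),
      cr_one (a := x) (c := a) (b := a) (d := c) (by omega),
      cr_zero (a := x) (c := a) (b := b) (d := c) (by omega),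
      cr_zero (a := x) (c := a) (b := b) (d := d) (by omega),
      cr_zero (a := x) (c := a) (b := a) (d := d) (by omega)]; norm_num
  · rw [cr_zero (a := a) (c := c) (b := b) (d := d) (by omega),
      cr_zero (a := b) (c := d) (b := a) (d := c) (by omega),
      cr_zero (a := x) (c := a) (b := a) (d := c) (by omega),
      cr_zero (a := x) (c := a) (b := b) (d := c) (by omega),
      cr_one (a := x) (c := a) (b := b) (d := d) (by omega),
      cr_zero (a := x) (c := a) (b := a) (d := d) (by omega)]; norm_num

/-- crossing number of a state. -/
def Nst {n : ℕ} (σ : Equiv.Perm (Fin n)) (A : Finset (Fin n)) (w : Equiv.Perm (Fin n)) : ℤ :=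
  ∑ x ∈ A ×ˢ A, cr (w x.1) (σ x.1) (w x.2) (σ x.2)

theorem Nst_nonneg {n : ℕ} (σ : Equiv.Perm (Fin n)) (A : Finset (Fin n))
    (w : Equiv.Perm (Fin n)) : 0 ≤ Nst σ A w := Finset.sum_nonneg fun _ _ => cr_nonneg _ _ _ _

theorem Nst_erase {n : ℕ} {σ w : Equiv.Perm (Fin n)} {A : Finset (Fin n)} {i : Fin n}
    (hw : w i = σ i) : Nst σ (A.erase i) w = Nst σ A w := by
  unfold Nst
  apply Finset.sum_subset
  · exact Finset.product_subset_product (Finset.erase_subset _ _) (Finset.erase_subset _ _)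
  · rintro ⟨a, b⟩ hab hn
    simp only [Finset.mem_product, Finset.mem_erase] at hab hn
    apply cr_zero
    by_cases ha : a = i
    · subst ha; simp only [hw]; omega
    · have hb : b = i := by tauto
      subst hb; simp only [hw]; omega

theorem Nst_free {n : ℕ} {σ w : Equiv.Perm (Fin n)} {A : Finset (Fin n)}
    (h : ∀ j, j ∉ A → w j = σ j) {p q : Fin n} (hpo : w p = σ q)
    (hpq : (w p : ℕ) < w q) (hadj : ∀ k ∈ A, ¬ ((w p : ℕ) < w k ∧ (w k : ℕ) < w q)) :
    Nst σ A ((Equiv.swap p q).trans w) = Nst σ A w := by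
  unfold Nst
  have hne : p ≠ q := by rintro rfl; omega
  apply Finset.sum_congr rfl
  rintro ⟨a, b⟩ hab
  simp only [Finset.mem_product] at hab
  obtain ⟨ka, hka, ea⟩ := exists_w h hab.1
  have a1 := hadj a hab.1
  have a2 := hadj b hab.2
  have a3 := hadj ka hka
  rw [ea] at a3
  have hv : (w p : ℕ) = σ q := by rw [hpo]
  simp only [Equiv.trans_apply]
  have E : ∀ x, x ≠ p → x ≠ q → w (Equiv.swap p q x) = w x := by
    intro x h1 h2; rw [Equiv.swap_apply_of_ne_of_ne h1 h2]
  by_cases hap : a = p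
  · subst hap
    by_cases hbp : b = a
    · subst hbp; rw [cr_zero (by omega), cr_zero (by omega)]
    by_cases hbq : b = q
    · subst hbq; simp only [Equiv.swap_apply_left, Equiv.swap_apply_right]
      rw [cr_zero (by omega), cr_zero (by omega)]
    rw [E b hbp hbq]; simp only [Equiv.swap_apply_left]
    exact cr_left hpq a2 (posw_ne w hbp) (posw_ne w hbq)
  by_cases haq : a = q
  · subst haq
    by_cases hbp : b = p
    · subst hbp; simp only [Equiv.swap_apply_left, Equiv.swap_apply_right]
      rw [cr_zero (by omega), cr_zero (by omega)]
    by_cases hbq : b = a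
    · subst hbq; rw [cr_zero (by omega), cr_zero (by omega)]
    rw [E b hbp hbq]; simp only [Equiv.swap_apply_right]
    exact (cr_left hpq a2 (posw_ne w hbp) (posw_ne w hbq)).symm
  rw [E a hap haq]
  by_cases hbp : b = p
  · subst hbp
    simp only [Equiv.swap_apply_left]
    exact cr_right hpq a1 (posw_ne w hap) (posw_ne w haq) a3 (by rw [hv]; exact posw_ne σ haq)
  by_cases hbq : b = q
  · subst hbq
    simp only [Equiv.swap_apply_right]
    exact (cr_right hpq a1 (posw_ne w hap) (posw_ne w haq) a3
      (by rw [hv]; exact posw_ne σ haq)).symm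
  rw [E b hbp hbq]

theorem Nst_swap {n : ℕ} {σ w : Equiv.Perm (Fin n)} {A : Finset (Fin n)}
    (h : ∀ j, j ∉ A → w j = σ j) {p q o : Fin n} (hp : p ∈ A) (hq : q ∈ A) (ho : o ∈ A)
    (hpo : w p = σ o)
    (hpq : (w p : ℕ) < w q) (hadj : ∀ k ∈ A, ¬ ((w p : ℕ) < w k ∧ (w k : ℕ) < w q))
    (hop : o ≠ p) (hoq : o ≠ q)
    (H : ((w q : ℕ) ≤ σ p ∧ ((σ p : ℕ) < σ q ∨ (σ q : ℕ) < w p) ∧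
            ((w o : ℕ) < w p ∨ (σ p : ℕ) < w o)) ∨
         ((σ q : ℕ) < w p ∧ ((σ p : ℕ) < σ q ∨ (w q : ℕ) ≤ σ p) ∧
            ((w o : ℕ) ≤ σ q ∨ (w q : ℕ) < w o))) :
    Nst σ A ((Equiv.swap p q).trans w) + 1 = Nst σ A w := by
  have hne : p ≠ q := by rintro rfl; omega
  have hv : (w p : ℕ) = σ o := by rw [hpo]
  have E : ∀ x, x ≠ p → x ≠ q → w (Equiv.swap p q x) = w x := by
    intro x h1 h2; rw [Equiv.swap_apply_of_ne_of_ne h1 h2]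
  suffices hh : Nst σ A w - Nst σ A ((Equiv.swap p q).trans w) = 1 by omega
  unfold Nst
  rw [← Finset.sum_sub_distrib]
  have hsub : (({p, q, o} : Finset (Fin n)) ×ˢ ({p, q, o} : Finset (Fin n))) ⊆ A ×ˢ A := by
    apply Finset.product_subset_product <;>
    · intro x hx
      simp only [Finset.mem_insert, Finset.mem_singleton] at hx
      rcases hx with rfl | rfl | rfl <;> assumption
  rw [← Finset.sum_subset hsub]
  · have wop := posw_ne w hop
    have woq := posw_ne w hoq
    have sop := posw_ne σ hop
    have soq := posw_ne σ hoq
    rw [Finset.sum_product]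
    simp only [Finset.sum_insert (show p ∉ ({q, o} : Finset (Fin n)) by simp [hne, hop.symm]),
      Finset.sum_insert (show q ∉ ({o} : Finset (Fin n)) by simp [hoq.symm]),
      Finset.sum_singleton, Equiv.trans_apply, Equiv.swap_apply_left, Equiv.swap_apply_right,
      E o hop hoq]
    rw [← hv]
    rw [← hv] at sop soq
    exact cr_nine hpq wop woq sop soq H
  · rintro ⟨a, b⟩ hab hn
    simp only [Finset.mem_product] at hab
    simp only [Finset.mem_product, Finset.mem_insert, Finset.mem_singleton] at hn
    obtain ⟨ka, hka, ea⟩ := exists_w h hab.1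
    have a1 := hadj a hab.1
    have a2 := hadj b hab.2
    have a3 := hadj ka hka
    rw [ea] at a3
    rw [sub_eq_zero]
    simp only [Equiv.trans_apply]
    by_cases hap : a = p
    · subst hap
      have b1 : b ≠ a := fun e => hn ⟨Or.inl rfl, Or.inl e⟩
      have b2 : b ≠ q := fun e => hn ⟨Or.inl rfl, Or.inr (Or.inl e)⟩
      rw [E b b1 b2]; simp only [Equiv.swap_apply_left]
      exact (cr_left hpq a2 (posw_ne w b1) (posw_ne w b2)).symm
    by_cases haq : a = q
    · subst haq
      have b1 : b ≠ p := fun e => hn ⟨Or.inr (Or.inl rfl), Or.inl e⟩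
      have b2 : b ≠ a := fun e => hn ⟨Or.inr (Or.inl rfl), Or.inr (Or.inl e)⟩
      rw [E b b1 b2]; simp only [Equiv.swap_apply_right]
      exact cr_left hpq a2 (posw_ne w b1) (posw_ne w b2)
    rw [E a hap haq]
    by_cases hbp : b = p
    · subst hbp
      have a4 : a ≠ o := fun e => hn ⟨Or.inr (Or.inr e), Or.inl rfl⟩
      simp only [Equiv.swap_apply_left]
      exact (cr_right hpq a1 (posw_ne w hap) (posw_ne w haq) a3
        (by rw [hv]; exact posw_ne σ a4)).symm
    by_cases hbq : b = q
    · subst hbq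
      have a4 : a ≠ o := fun e => hn ⟨Or.inr (Or.inr e), Or.inr (Or.inl rfl)⟩
      simp only [Equiv.swap_apply_right]
      exact cr_right hpq a1 (posw_ne w hap) (posw_ne w haq) a3
        (by rw [hv]; exact posw_ne σ a4)
    rw [E b hbp hbq]

theorem sched_exists {n : ℕ} (σ : Equiv.Perm (Fin n)) (N : ℕ) :
    ∀ (A : Finset (Fin n)) (w : Equiv.Perm (Fin n)), (∀ j, j ∉ A → w j = σ j) →
      (Nst σ A w).toNat + A.card = N → Sched σ A (posw w) (Nst σ A w).toNat := by
  induction N using Nat.strong_induction_on with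
  | _ N ih =>
  intro A w h hN
  rcases A.eq_empty_or_nonempty with rfl | hA
  · simpa [Nst] using Sched.nil (posw w) (rng_posw w)
  obtain ⟨i, hi, hmin⟩ := Finset.exists_min_image A
    (fun i => |2 * ((w i : ℕ) : ℤ) - (2 * ((σ i : ℕ) : ℤ) + 1)|) hA
  have hoff : ∀ p q : Fin n, p ∈ A → q ∈ A →
      ∀ j, j ∉ A → ((Equiv.swap p q).trans w) j = σ j := by
    intro p q hp hq j hj
    have h1 : j ≠ p := by rintro rfl; exact hj hp
    have h2 : j ≠ q := by rintro rfl; exact hj hq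
    simp [Equiv.swap_apply_of_ne_of_ne h1 h2, h j hj]
  have swapcase : ∀ p q o : Fin n, p ∈ A → q ∈ A → o ∈ A → w p = σ o → (w p : ℕ) < w q →
      (∀ k ∈ A, ¬ ((w p : ℕ) < w k ∧ (w k : ℕ) < w q)) →
      Nst σ A ((Equiv.swap p q).trans w) + 1 = Nst σ A w →
      Sched σ A (posw w) (Nst σ A w).toNat := by
    intro p q o hp hq ho hpo hpq hadj hc
    have h0 := Nst_nonneg σ A ((Equiv.swap p q).trans w)
    have e : (Nst σ A w).toNat = (Nst σ A ((Equiv.swap p q).trans w)).toNat + 1 := by omega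
    rw [e]
    apply sched_swap h hp hq ho hpo hpq hadj
    exact ih _ (by omega) A _ (hoff p q hp hq) rfl
  rcases lt_trichotomy (w i : ℕ) (σ i : ℕ) with hlt | heq | hgt
  · -- rightward
    obtain ⟨q0, hq0, hq0'⟩ := exists_w h hi
    obtain ⟨q, hq, hqmin⟩ := Finset.exists_min_image (A.filter fun k => (w i : ℕ) < w k)
      (fun k => (w k : ℕ)) ⟨q0, by simp only [Finset.mem_filter]; rw [hq0']; exact ⟨hq0, hlt⟩⟩
    simp only [Finset.mem_filter] at hq hqmin
    have hqs : (w q : ℕ) ≤ σ i := by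
      have := hqmin q0 ⟨hq0, by rw [hq0']; exact hlt⟩
      rwa [hq0'] at this
    have hadj : ∀ k ∈ A, ¬ ((w i : ℕ) < w k ∧ (w k : ℕ) < w q) := by
      intro k hk hh
      have := hqmin k ⟨hk, hh.1⟩
      omega
    obtain ⟨o, ho, hoe⟩ := exists_s h hi
    have hov : (σ o : ℕ) = w i := by rw [hoe]
    have hop : o ≠ i := by rintro rfl; omega
    have m1 := hmin q hq.1
    have m2 := hmin o ho
    simp only [abs_eq_max_neg] at m1 m2
    have hqi : q ≠ i := by rintro rfl; omega
    have sq := posw_ne σ hqi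
    have so := posw_ne w hop
    have hoq : o ≠ q := by
      rintro rfl
      omega
    refine swapcase i q o hi hq.1 ho hoe.symm hq.2 hadj
      (Nst_swap h hi hq.1 ho hoe.symm hq.2 hadj hop hoq (Or.inl ⟨hqs, ?_, ?_⟩))
    · omega
    · omega
  · have heq' : w i = σ i := Fin.ext heq
    apply sched_fixed hi heq'
    rw [← Nst_erase (A := A) heq']
    refine ih _ ?_ _ w ?_ rfl
    · rw [Nst_erase heq', Finset.card_erase_of_mem hi]
      have := Finset.card_pos.2 hA
      omega
    · intro j hj
      by_cases hji : j = i
      · rw [hji, heq']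
      · exact h j (fun hh => hj (Finset.mem_erase.2 ⟨hji, hh⟩))
  · -- leftward
    obtain ⟨p0, hp0, hp0'⟩ := exists_w h hi
    obtain ⟨p, hp, hpmax⟩ := Finset.exists_max_image (A.filter fun k => (w k : ℕ) < w i)
      (fun k => (w k : ℕ)) ⟨p0, by simp only [Finset.mem_filter]; rw [hp0']; exact ⟨hp0, hgt⟩⟩
    simp only [Finset.mem_filter] at hp hpmax
    have hps : (σ i : ℕ) ≤ w p := by
      have := hpmax p0 ⟨hp0, by rw [hp0']; exact hgt⟩
      rwa [hp0'] at this
    have hadj : ∀ k ∈ A, ¬ ((w p : ℕ) < w k ∧ (w k : ℕ) < w i) := by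
      intro k hk hh
      have := hpmax k ⟨hk, hh.2⟩
      omega
    obtain ⟨o, ho, hoe⟩ := exists_s h hp.1
    have hov : (σ o : ℕ) = w p := by rw [hoe]
    have hpi : p ≠ i := by rintro rfl; omega
    by_cases hoi : o = i
    · subst hoi
      have hfix : ((Equiv.swap p o).trans w) o = σ o := by simp [hoe]
      have e1 := Nst_free h hoe.symm hp.2 hadj
      rw [← e1, ← Nst_erase (A := A) hfix]
      apply sched_free h hp.1 hi hoe.symm hp.2 hadj
      refine ih _ ?_ _ _ ?_ rfl
      · rw [Nst_erase hfix, e1, Finset.card_erase_of_mem hi]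
        have := Finset.card_pos.2 hA
        omega
      · intro j hj
        by_cases hji : j = o
        · rw [hji, hfix]
        · exact hoff p o hp.1 hi j (fun hh => hj (Finset.mem_erase.2 ⟨hji, hh⟩))
    · have m1 := hmin p hp.1
      have m2 := hmin o ho
      simp only [abs_eq_max_neg] at m1 m2
      have sp := posw_ne σ hpi
      have so := posw_ne w hoi
      have so' := posw_ne σ hoi
      have hop : o ≠ p := by
        rintro rfl
        omega
      refine swapcase p i o hp.1 hi ho hoe.symm hp.2 hadj
        (Nst_swap h hp.1 hi ho hoe.symm hp.2 hadj hop hoi (Or.inr ⟨by omega, ?_, ?_⟩))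
      · omega
      · omega

theorem sched_main {n : ℕ} (σ : Equiv.Perm (Fin n)) :
    Sched σ Finset.univ (fun j => 2 * ((j : ℕ) : ℤ)) (Ncross n σ) := by
  have h := sched_exists σ _ Finset.univ (Equiv.refl _) (by simp) rfl
  have e : (Nst σ Finset.univ (Equiv.refl _)).toNat = Ncross n σ := by
    unfold Nst cr Ncross
    rw [Finset.univ_product_univ, Finset.sum_boole, Int.toNat_natCast]
    congr 1
    ext ⟨i, j⟩
    rw [Finset.mem_filter, Finset.mem_filter]
    simp only [Finset.mem_univ, true_and, Equiv.refl_apply]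
    constructor
    · intro hh
      exact ⟨by rintro rfl; omega, by omega⟩
    · intro hh
      omega
  rw [e] at h
  exact h

/-! ### Plans: unfolded schedules -/

structure Plan {n : ℕ} (σ : Equiv.Perm (Fin n)) (A : Finset (Fin n)) (P0 : Fin n → ℤ) (c : ℕ) where
  K : ℕ
  P : ℕ → Fin n → ℤ
  T : Fin n → ℕ
  sw : Finset ℕ
  P_zero : P 0 = P0
  T_lt : ∀ j ∈ A, T j < K
  rng : ∀ k, Rng (P k)
  card_sw : sw.card = c
  sw_lt : ∀ k ∈ sw, k < K
  inj : ∀ k < K, Set.InjOn (P k) (A.filter fun j => k ≤ T j)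
  swap : ∀ k ∈ sw, SwapStep σ (A.filter fun j => k ≤ T j) (P k) (P (k + 1)) ∧ ∀ j ∈ A, T j ≠ k
  quiet : ∀ k < K, k ∉ sw →
    (MoveStep σ (A.filter fun j => k ≤ T j) (P k) (P (k + 1)) ∧ ∀ j ∈ A, T j ≠ k) ∨
    (∃ i ∈ A, T i = k ∧ (P k i = outp σ i - 1 ∨ P k i = outp σ i + 1) ∧ P (k + 1) = P k ∧
      ∀ j ∈ A, T j = k → j = i)

/-- Prepending one step. -/
def consSeq {α : Type*} (a : α) (f : ℕ → α) : ℕ → α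
  | 0 => a
  | k + 1 => f k

theorem plan_exists {n : ℕ} {σ : Equiv.Perm (Fin n)} {A : Finset (Fin n)} {P0 : Fin n → ℤ} {c : ℕ}
    (h : Sched σ A P0 c) : Nonempty (Plan σ A P0 c) := by
  induction h with
  | nil P h =>
    exact ⟨{ K := 0, P := fun _ => P, T := fun _ => 0, sw := ∅, P_zero := rfl,
             T_lt := by simp, rng := fun _ => h, card_sw := rfl, sw_lt := by simp,
             inj := by simp, swap := by simp, quiet := by simp }⟩
  | move A P P' c hr hi hm hs ih =>
    obtain ⟨L⟩ := ih
    have hL := L.P_zero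
    refine ⟨{ K := L.K + 1, P := consSeq P L.P, T := fun j => L.T j + 1,
              sw := L.sw.map (addRightEmbedding 1), P_zero := rfl,
              T_lt := fun j hj => Nat.succ_lt_succ (L.T_lt j hj), rng := ?_,
              card_sw := by rw [Finset.card_map, L.card_sw], sw_lt := ?_,
              inj := ?_, swap := ?_, quiet := ?_ }⟩
    · rintro (_ | k)
      · exact hr
      · exact L.rng k
    · simp only [Finset.mem_map, addRightEmbedding_apply]
      rintro _ ⟨k, hk, rfl⟩
      exact Nat.succ_lt_succ (L.sw_lt k hk)
    · rintro (_ | k) hk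
      · simpa [consSeq] using hi
      · simpa [consSeq] using L.inj k (by omega)
    · simp only [Finset.mem_map, addRightEmbedding_apply]
      rintro _ ⟨k, hk, rfl⟩
      simpa [consSeq] using L.swap k hk
    · rintro (_ | k) hk hk'
      · left; simpa [consSeq, hL] using hm
      · have := L.quiet k (by omega) (fun h => hk' (by simpa using h))
        simpa [consSeq] using this
  | swap A P P' c hr hi hm hs ih =>
    obtain ⟨L⟩ := ih
    have hL := L.P_zero
    refine ⟨{ K := L.K + 1, P := consSeq P L.P, T := fun j => L.T j + 1,
              sw := insert 0 (L.sw.map (addRightEmbedding 1)), P_zero := rfl,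
              T_lt := fun j hj => Nat.succ_lt_succ (L.T_lt j hj), rng := ?_,
              card_sw := ?_, sw_lt := ?_,
              inj := ?_, swap := ?_, quiet := ?_ }⟩
    · rintro (_ | k)
      · exact hr
      · exact L.rng k
    · rw [Finset.card_insert_of_notMem (by simp), Finset.card_map, L.card_sw]
    · simp only [Finset.mem_insert, Finset.mem_map, addRightEmbedding_apply]
      rintro _ (rfl | ⟨k, hk, rfl⟩)
      · omega
      · exact Nat.succ_lt_succ (L.sw_lt k hk)
    · rintro (_ | k) hk
      · simpa [consSeq] using hi
      · simpa [consSeq] using L.inj k (by omega)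
    · simp only [Finset.mem_insert, Finset.mem_map, addRightEmbedding_apply]
      rintro _ (rfl | ⟨k, hk, rfl⟩)
      · simpa [consSeq, hL] using hm
      · simpa [consSeq] using L.swap k hk
    · rintro (_ | k) hk hk'
      · simp at hk'
      · have := L.quiet k (by omega) (fun h => hk' (by simpa using h))
        simpa [consSeq] using this
  | cap A P c hr hi i hiA hp hs ih =>
    obtain ⟨L⟩ := ih
    have hL := L.P_zero
    have hT : ∀ j, j ≠ i → (if j = i then 0 else L.T j + 1) = L.T j + 1 := by
      intro j hj; simp [hj]
    have hF : ∀ k, (A.filter fun j => k + 1 ≤ if j = i then 0 else L.T j + 1) =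
        (A.erase i).filter fun j => k ≤ L.T j := by
      intro k
      ext j
      simp only [Finset.mem_filter, Finset.mem_erase]
      by_cases hj : j = i
      · simp [hj]
      · simp [hj]
    refine ⟨{ K := L.K + 1, P := consSeq P L.P, T := fun j => if j = i then 0 else L.T j + 1,
              sw := L.sw.map (addRightEmbedding 1), P_zero := rfl,
              T_lt := ?_, rng := ?_,
              card_sw := by rw [Finset.card_map, L.card_sw], sw_lt := ?_,
              inj := ?_, swap := ?_, quiet := ?_ }⟩
    · intro j hj
      by_cases hji : j = i
      · simp [hji]
      · have := L.T_lt j (Finset.mem_erase.2 ⟨hji, hj⟩)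
        simp [hji, this]
    · rintro (_ | k)
      · exact hr
      · exact L.rng k
    · simp only [Finset.mem_map, addRightEmbedding_apply]
      rintro _ ⟨k, hk, rfl⟩
      exact Nat.succ_lt_succ (L.sw_lt k hk)
    · rintro (_ | k) hk
      · simpa [consSeq] using hi
      · rw [hF]; exact L.inj k (by omega)
    · simp only [Finset.mem_map, addRightEmbedding_apply]
      rintro _ ⟨k, hk, rfl⟩
      rw [hF]
      obtain ⟨h1, h2⟩ := L.swap k hk
      refine ⟨h1, ?_⟩
      intro j hj
      by_cases hji : j = i
      · simp [hji]
      · have := h2 j (Finset.mem_erase.2 ⟨hji, hj⟩)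
        simp [hji, this]
    · rintro (_ | k) hk hk'
      · right
        refine ⟨i, hiA, by simp, hp, hL, ?_⟩
        intro j hj hj'
        by_contra hji
        simp [hji] at hj'
      · have := L.quiet k (by omega) (fun h => hk' (by simpa using h))
        rw [hF]
        rcases this with ⟨h1, h2⟩ | ⟨i', hi', h1, h2, h3, h4⟩
        · left
          refine ⟨h1, ?_⟩
          intro j hj
          by_cases hji : j = i
          · simp [hji]
          · have := h2 j (Finset.mem_erase.2 ⟨hji, hj⟩)
            simp [hji, this]
        · right
          rw [Finset.mem_erase] at hi'
          refine ⟨i', hi'.2, by simp [hi'.1, h1], h2, h3, ?_⟩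
          intro j hj hj'
          by_cases hji : j = i
          · simp [hji] at hj'
          · simp only [hji, if_false] at hj'
            exact h4 j (Finset.mem_erase.2 ⟨hji, hj⟩) (by omega)

/-! ### The smooth step -/

theorem st_symm (x : ℝ) : Real.smoothTransition (1 - x) = 1 - Real.smoothTransition x := by
  have h := Real.smoothTransition.pos_denom x
  unfold Real.smoothTransition
  rw [sub_sub_cancel, add_comm (expNegInvGlue (1 - x))]
  field_simp
  ring

theorem st_half : Real.smoothTransition (1 / 2) = 1 / 2 := by
  have := st_symm (1 / 2)
  norm_num at this ⊢
  linarith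

theorem st_eq_half {x : ℝ} (h : Real.smoothTransition x = 1 / 2) : x = 1 / 2 := by
  have h0 : 0 < x := by
    by_contra hx
    rw [Real.smoothTransition.zero_of_nonpos (not_lt.1 hx)] at h
    norm_num at h
  have h1 : x < 1 := by
    by_contra hx
    rw [Real.smoothTransition.one_of_one_le (not_lt.1 hx)] at h
    norm_num at h
  have hd := Real.smoothTransition.pos_denom x
  unfold Real.smoothTransition at h
  rw [div_eq_iff hd.ne'] at h
  have h2 : expNegInvGlue x = expNegInvGlue (1 - x) := by linarith
  unfold expNegInvGlue at h2
  rw [if_neg (by linarith), if_neg (by linarith)] at h2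
  have h3 := Real.exp_injective h2
  have h4 : x = 1 - x := inv_injective (neg_injective h3)
  linarith

theorem st_deriv : ∃ s : ℝ, 0 < s ∧ HasDerivAt Real.smoothTransition s (1 / 2) := by
  have hg : HasDerivAt expNegInvGlue (Real.exp (-(1 / 2 : ℝ)⁻¹) * 4) (1 / 2) := by
    have h1 : HasDerivAt (fun x : ℝ => Real.exp (-x⁻¹)) (Real.exp (-(1 / 2 : ℝ)⁻¹) * 4) (1 / 2) := by
      have := ((hasDerivAt_inv (x := (1 / 2 : ℝ)) (by norm_num)).neg).exp
      refine this.congr_deriv ?_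
      simp only [Pi.neg_apply]
      norm_num
    apply h1.congr_of_eventuallyEq
    filter_upwards [lt_mem_nhds (show (0 : ℝ) < 1 / 2 by norm_num)] with x hx
    unfold expNegInvGlue
    rw [if_neg (not_le.2 hx)]
  set d := Real.exp (-(1 / 2 : ℝ)⁻¹) * 4 with hd
  have hdpos : 0 < d := by positivity
  have hg' : HasDerivAt (fun x : ℝ => expNegInvGlue (1 - x)) (-d) (1 / 2) := by
    have h2 : HasDerivAt (fun x : ℝ => 1 - x) (-1) (1 / 2) := by
      simpa using (hasDerivAt_id (1 / 2 : ℝ)).const_sub 1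
    have hg2 : HasDerivAt expNegInvGlue d (1 - 1 / 2) := by
      convert hg using 1; norm_num
    have := HasDerivAt.comp (1 / 2 : ℝ) hg2 h2
    rw [mul_neg_one] at this
    exact this
  have hp : 0 < expNegInvGlue (1 / 2) := expNegInvGlue.pos_of_pos (by norm_num)
  have hq : expNegInvGlue (1 - 1 / 2) = expNegInvGlue (1 / 2) := by norm_num
  have := hg.div (hg.add hg') (Real.smoothTransition.pos_denom _).ne'
  refine ⟨_, ?_, this⟩
  simp only [Pi.add_apply, hq]
  have e : d * (expNegInvGlue (1 / 2) + expNegInvGlue (1 / 2)) - expNegInvGlue (1 / 2) * (d + -d)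
    = 2 * d * expNegInvGlue (1 / 2) := by ring
  rw [e]
  positivity

/-! ### Coordinates on the disk -/

noncomputable def e0 : Plane := !₂[1, 0]
noncomputable def e1 : Plane := !₂[0, 1]
noncomputable def perpPt (θ : ℝ) : Plane := (-Real.sin θ) • e0 + Real.cos θ • e1

theorem unitPt_eq (θ : ℝ) : unitPt θ = Real.cos θ • e0 + Real.sin θ • e1 := by
  ext i; fin_cases i <;> simp [unitPt, e0, e1]

theorem unitPt_zero (θ : ℝ) : unitPt θ 0 = Real.cos θ := by simp [unitPt]
theorem unitPt_one (θ : ℝ) : unitPt θ 1 = Real.sin θ := by simp [unitPt]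
theorem perpPt_zero (θ : ℝ) : perpPt θ 0 = -Real.sin θ := by simp [perpPt, e0, e1]
theorem perpPt_one (θ : ℝ) : perpPt θ 1 = Real.cos θ := by simp [perpPt, e0, e1]

theorem unitPt_norm (θ : ℝ) : ‖unitPt θ‖ = 1 := by
  rw [EuclideanSpace.norm_eq]
  simp [Fin.sum_univ_two, unitPt_zero, unitPt_one]

noncomputable def Em (n : ℕ) (x y : ℝ) : Plane := Real.exp (-y) • unitPt (x * Real.pi / n)

theorem Em_norm (n : ℕ) (x y : ℝ) : ‖Em n x y‖ = Real.exp (-y) := by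
  rw [Em, norm_smul, unitPt_norm, Real.norm_eq_abs, abs_of_pos (Real.exp_pos _), mul_one]

theorem Em_inj {n : ℕ} (hn : 1 ≤ n) {x y x' y' : ℝ} (h : Em n x y = Em n x' y')
    (h0 : 0 ≤ x) (h1 : x ≤ 2 * n - 1) (h0' : 0 ≤ x') (h1' : x' ≤ 2 * n - 1) : x = x' ∧ y = y' := by
  have hy : y = y' := by
    have := congrArg norm h
    rw [Em_norm, Em_norm] at this
    have := Real.exp_injective this
    linarith
  refine ⟨?_, hy⟩
  subst hy
  have h2 : unitPt (x * Real.pi / n) = unitPt (x' * Real.pi / n) :=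
    smul_right_injective _ (Real.exp_pos (-y)).ne' h
  have c := congrArg (fun v : Plane => v 0) h2
  have s := congrArg (fun v : Plane => v 1) h2
  simp only [unitPt_zero, unitPt_one] at c s
  have hnpos : (0 : ℝ) < n := by exact_mod_cast hn
  have hpi := Real.pi_pos
  have e : x * Real.pi / n - x' * Real.pi / n = (x - x') * (Real.pi / n) := by ring
  have hpn : 0 < Real.pi / n := by positivity
  have hpe : 2 * Real.pi = 2 * n * (Real.pi / n) := by field_simp
  have : Real.cos (x * Real.pi / n - x' * Real.pi / n) = 1 := by
    rw [Real.cos_sub, c, s]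
    nlinarith [Real.sin_sq_add_cos_sq (x' * Real.pi / n)]
  rw [Real.cos_eq_one_iff_of_lt_of_lt] at this
  · rw [e] at this
    rcases mul_eq_zero.1 this with h | h
    · linarith
    · exact absurd h hpn.ne'
  · rw [e, hpe]; nlinarith
  · rw [e, hpe]; nlinarith

/-- tangent vector in polar coordinates. -/
noncomputable def tv (n : ℕ) (x y a b : ℝ) : Plane :=
  Real.exp (-y) • ((-b) • unitPt (x * Real.pi / n) + (a * Real.pi / n) • perpPt (x * Real.pi / n))

theorem Em_deriv (n : ℕ) {x y : ℝ → ℝ} {t a b : ℝ} (hx : HasDerivAt x a t) (hy : HasDerivAt y b t) :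
    HasDerivAt (fun t => Em n (x t) (y t)) (tv n (x t) (y t) a b) t := by
  have hθ : HasDerivAt (fun t => x t * Real.pi / n) (a * Real.pi / n) t :=
    (hx.mul_const _).div_const _
  have h1 := (hθ.cos.smul_const e0).add (hθ.sin.smul_const e1)
  have h2 := (hy.neg.exp).smul h1
  have : (fun t => Em n (x t) (y t)) = (fun t => Real.exp (-y t) •
      (Real.cos (x t * Real.pi / n) • e0 + Real.sin (x t * Real.pi / n) • e1)) := by
    funext t; rw [Em, unitPt_eq]
  rw [this]
  refine h2.congr_deriv ?_
  simp only [tv, unitPt_eq, perpPt, Pi.add_apply, Pi.neg_apply]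
  module

theorem Em_contDiff (n : ℕ) {x y : ℝ → ℝ} (hx : ContDiff ℝ (⊤ : ℕ∞) x)
    (hy : ContDiff ℝ (⊤ : ℕ∞) y) : ContDiff ℝ (⊤ : ℕ∞) (fun t => Em n (x t) (y t)) := by
  simp only [Em, unitPt_eq]
  have hθ : ContDiff ℝ (⊤ : ℕ∞) (fun t => x t * Real.pi / n) := (hx.mul contDiff_const).div_const _
  exact (hy.neg.exp).smul ((hθ.cos.smul contDiff_const).add (hθ.sin.smul contDiff_const))

theorem tv_lin (n : ℕ) (x y a b a' b' s t : ℝ) :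
    s • tv n x y a b + t • tv n x y a' b' = tv n x y (s * a + t * a') (s * b + t * b') := by
  have e : (s * a + t * a') * Real.pi / n = s * (a * Real.pi / n) + t * (a' * Real.pi / n) := by ring
  simp only [tv, e]
  module

theorem tv_eq_zero {n : ℕ} (hn : 1 ≤ n) {x y a b : ℝ} (h : tv n x y a b = 0) : a = 0 ∧ b = 0 := by
  have h2 := (smul_eq_zero.1 h).resolve_left (Real.exp_pos (-y)).ne'
  have c := congrArg (fun v : Plane => v 0) h2
  have s := congrArg (fun v : Plane => v 1) h2
  simp only [PiLp.add_apply, PiLp.smul_apply, smul_eq_mul, unitPt_zero, unitPt_one, perpPt_zero,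
    perpPt_one, PiLp.zero_apply] at c s
  set θ := x * Real.pi / n
  have hp := Real.sin_sq_add_cos_sq θ
  have hb : b = 0 := by linear_combination (-Real.cos θ) * c + (-Real.sin θ) * s - b * hp
  have ha : a * Real.pi / n = 0 := by
    linear_combination (-Real.sin θ) * c + (Real.cos θ) * s - (a * Real.pi / n) * hp
  refine ⟨?_, hb⟩
  have hnpos : (0 : ℝ) < n := by exact_mod_cast hn
  have hpi := Real.pi_pos
  have : a * (Real.pi / n) = 0 := by rw [← ha]; ring
  exact (mul_eq_zero.1 this).resolve_right (by positivity)

theorem tv_self (n : ℕ) (x y : ℝ) : tv n x y 0 0 = 0 := by simp [tv]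

theorem tv_inner (n : ℕ) (x y a b : ℝ) :
    inner ℝ (tv n x y a b) (Em n x y) = Real.exp (-y) ^ 2 * (-b) := by
  have hp := Real.sin_sq_add_cos_sq (x * Real.pi / n)
  simp only [tv, Em, EuclideanSpace.inner_eq_star_dotProduct]
  simp [dotProduct, Fin.sum_univ_two, unitPt_zero, unitPt_one, perpPt_zero, perpPt_one]
  linear_combination (-(Real.exp (-y) ^ 2 * b)) * hp

theorem tv_indep {n : ℕ} (hn : 1 ≤ n) {x y a b a' b' : ℝ} (h : a * b' - a' * b ≠ 0) :
    LinearIndependent ℝ ![tv n x y a b, tv n x y a' b'] := by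
  rw [LinearIndependent.pair_iff]
  intro s t hst
  rw [tv_lin] at hst
  obtain ⟨h1, h2⟩ := tv_eq_zero hn hst
  constructor
  · have : s * (a * b' - a' * b) = 0 := by linear_combination b' * h1 - a' * h2
    exact (mul_eq_zero.1 this).resolve_right h
  · have : t * (a * b' - a' * b) = 0 := by linear_combination a * h2 - b * h1
    exact (mul_eq_zero.1 this).resolve_right h

/-! ### The arcs -/

section arcs

variable {n : ℕ} {σ : Equiv.Perm (Fin n)} {P0 : Fin n → ℤ} {c : ℕ}

noncomputable def Xf (L : Plan σ Finset.univ P0 c) (j : Fin n) (y : ℝ) : ℝ :=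
  (L.P 0 j : ℝ) + ∑ k ∈ Finset.range L.K,
    ((L.P (k + 1) j : ℝ) - L.P k j) * Real.smoothTransition (y - k)

noncomputable def yf (T : ℕ) (t : ℝ) : ℝ := 4 * (T + 1) * t * (1 - t)
noncomputable def uf (T : ℕ) (t : ℝ) : ℝ := √(T + 1 : ℝ) * (2 * t - 1)
noncomputable def bf (T : ℕ) (t : ℝ) : ℝ := Real.smoothTransition ((1 + uf T t) / 2)

noncomputable def xf (L : Plan σ Finset.univ P0 c) (j : Fin n) (t : ℝ) : ℝ :=
  (1 - bf (L.T j) t) * Xf L j (yf (L.T j) t) + bf (L.T j) t * (outp σ j : ℝ)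

noncomputable def arcf (L : Plan σ Finset.univ P0 c) (j : Fin n) (t : ℝ) : Plane :=
  Em n (xf L j t) (yf (L.T j) t)

theorem Xf_partial (L : Plan σ Finset.univ P0 c) (j : Fin n) (y : ℝ) (m : ℕ) (h : (m : ℝ) ≤ y) :
    (L.P 0 j : ℝ) + ∑ k ∈ Finset.range m,
      ((L.P (k + 1) j : ℝ) - L.P k j) * Real.smoothTransition (y - k) = L.P m j := by
  induction m with
  | zero => simp
  | succ m ih =>
    push_cast at h
    rw [Finset.sum_range_succ, ← add_assoc, ih (by linarith),
      Real.smoothTransition.one_of_one_le (by linarith)]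
    ring

theorem Xf_eq (L : Plan σ Finset.univ P0 c) (j : Fin n) {y : ℝ} {k : ℕ} (hk : k < L.K)
    (h0 : (k : ℝ) ≤ y) (h1 : y ≤ k + 1) :
    Xf L j y = L.P k j + ((L.P (k + 1) j : ℝ) - L.P k j) * Real.smoothTransition (y - k) := by
  unfold Xf
  rw [← Finset.sum_subset (s₁ := Finset.range (k + 1)) (Finset.range_subset_range.2 hk),
    Finset.sum_range_succ, ← add_assoc, Xf_partial L j y k h0]
  intro m _ hm
  rw [Finset.mem_range, not_lt] at hm
  have : ((k + 1 : ℕ) : ℝ) ≤ m := by exact_mod_cast hm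
  push_cast at this
  rw [Real.smoothTransition.zero_of_nonpos (by linarith), mul_zero]

theorem uf_sq (T : ℕ) (t : ℝ) : uf T t ^ 2 = T + 1 - yf T t := by
  have : √(T + 1 : ℝ) ^ 2 = T + 1 := Real.sq_sqrt (by positivity)
  unfold uf yf
  rw [mul_pow, this]; ring

theorem sqrtT_ge (T : ℕ) : 1 ≤ √(T + 1 : ℝ) := by
  rw [Real.one_le_sqrt]
  have : (0 : ℝ) ≤ T := by positivity
  linarith

theorem uf_neg {T : ℕ} {t : ℝ} (h : t < 1 / 2) : uf T t < 0 := by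
  have := sqrtT_ge T
  unfold uf; nlinarith

theorem uf_pos {T : ℕ} {t : ℝ} (h : 1 / 2 < t) : 0 < uf T t := by
  have := sqrtT_ge T
  unfold uf; nlinarith

theorem uf_half (T : ℕ) : uf T (1 / 2) = 0 := by unfold uf; norm_num

theorem uf_symm (T : ℕ) (t : ℝ) : uf T (1 - t) = - uf T t := by unfold uf; ring

theorem bf_symm (T : ℕ) (t : ℝ) : bf T (1 - t) = 1 - bf T t := by
  unfold bf
  rw [uf_symm, ← st_symm]
  congr 1; ring

theorem bf_zero {T : ℕ} {t : ℝ} (h : uf T t ≤ -1) : bf T t = 0 :=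
  Real.smoothTransition.zero_of_nonpos (by linarith)

theorem bf_one {T : ℕ} {t : ℝ} (h : 1 ≤ uf T t) : bf T t = 1 :=
  Real.smoothTransition.one_of_one_le (by linarith)

theorem bf_eq_half {T : ℕ} {t : ℝ} (h : bf T t = 1 / 2) : t = 1 / 2 := by
  have := st_eq_half h
  have h2 : uf T t = 0 := by linarith
  rcases lt_trichotomy t (1 / 2) with h3 | h3 | h3
  · exact absurd h2 (uf_neg h3).ne
  · exact h3
  · exact absurd h2 (uf_pos h3).ne'

theorem bf_nonneg (T : ℕ) (t : ℝ) : 0 ≤ bf T t := Real.smoothTransition.nonneg _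
theorem bf_le_one (T : ℕ) (t : ℝ) : bf T t ≤ 1 := Real.smoothTransition.le_one _

theorem yf_inj {T : ℕ} {t t' : ℝ} (h : yf T t = yf T t') : t = t' ∨ t' = 1 - t := by
  unfold yf at h
  have hT : (0 : ℝ) < 4 * (T + 1) := by positivity
  have : (4 * (T + 1 : ℝ)) * ((t - t') * (1 - t - t')) = 0 := by linear_combination h
  rcases mul_eq_zero.1 ((mul_eq_zero.1 this).resolve_left hT.ne') with h | h
  · left; linarith
  · right; linarith

theorem yf_le (T : ℕ) (t : ℝ) : yf T t ≤ T + 1 := by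
  have := uf_sq T t
  nlinarith [sq_nonneg (uf T t)]

theorem yf_pos {T : ℕ} {t : ℝ} (h : t ∈ Ioo (0 : ℝ) 1) : 0 < yf T t := by
  have h1 := h.1
  have h2 : 0 < 1 - t := by linarith [h.2]
  unfold yf; positivity

theorem yf_nonneg {T : ℕ} {t : ℝ} (h : t ∈ Icc (0 : ℝ) 1) : 0 ≤ yf T t := by
  have h1 := h.1
  have h2 : 0 ≤ 1 - t := by linarith [h.2]
  unfold yf; positivity

theorem exists_k {y : ℝ} {m : ℕ} (h0 : 0 < y) (h1 : y ≤ m + 1) :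
    ∃ k : ℕ, k ≤ m ∧ (k : ℝ) < y ∧ y ≤ k + 1 := by
  have h2 : 0 < ⌈y⌉₊ := Nat.ceil_pos.2 h0
  obtain ⟨k, hk⟩ := Nat.exists_eq_succ_of_ne_zero h2.ne'
  refine ⟨k, ?_, ?_, ?_⟩
  · have : ⌈y⌉₊ ≤ m + 1 := Nat.ceil_le.2 (by push_cast; exact h1)
    omega
  · apply Nat.lt_ceil.1; omega
  · have := Nat.le_ceil y
    rw [hk] at this
    push_cast at this; exact this

theorem k_unique {y : ℝ} {k k' : ℕ} (h0 : (k : ℝ) < y) (h1 : y ≤ k + 1) (h0' : (k' : ℝ) < y)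
    (h1' : y ≤ k' + 1) : k = k' := by
  have a : (k : ℝ) < ((k' + 1 : ℕ) : ℝ) := by push_cast; linarith
  have b : (k' : ℝ) < ((k + 1 : ℕ) : ℝ) := by push_cast; linarith
  have a' : k < k' + 1 := by exact_mod_cast a
  have b' : k' < k + 1 := by exact_mod_cast b
  omega

/-- The step at which strand `j` ends is a cap. -/
theorem cap_of_T (L : Plan σ Finset.univ P0 c) (j : Fin n) :
    L.T j ∉ L.sw ∧ (L.P (L.T j) j = outp σ j - 1 ∨ L.P (L.T j) j = outp σ j + 1) ∧
      L.P (L.T j + 1) = L.P (L.T j) := by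
  have hns : L.T j ∉ L.sw := fun h => (L.swap _ h).2 j (Finset.mem_univ j) rfl
  rcases L.quiet _ (L.T_lt j (Finset.mem_univ j)) hns with h | ⟨i, _, _, h1, h2, h3⟩
  · exact absurd rfl (h.2 j (Finset.mem_univ j))
  · have := h3 j (Finset.mem_univ j) rfl
    subst this
    exact ⟨hns, h1, h2⟩

/-- Kinds of passages at level `k`. -/
def PUp (L : Plan σ Finset.univ P0 c) (k : ℕ) (j : Fin n) (t : ℝ) : Prop :=
  k < L.T j ∧ t < 1 / 2 ∧ xf L j t = L.P k j +
    ((L.P (k + 1) j : ℝ) - L.P k j) * Real.smoothTransition (yf (L.T j) t - k)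

def PDown (L : Plan σ Finset.univ P0 c) (k : ℕ) (j : Fin n) (t : ℝ) : Prop :=
  k < L.T j ∧ 1 / 2 < t ∧ xf L j t = outp σ j

def PCap (L : Plan σ Finset.univ P0 c) (k : ℕ) (j : Fin n) (t : ℝ) : Prop :=
  k = L.T j ∧ 0 < bf (L.T j) t ∧ bf (L.T j) t < 1 ∧
    xf L j t = (1 - bf (L.T j) t) * L.P k j + bf (L.T j) t * outp σ j

theorem kind (L : Plan σ Finset.univ P0 c) (j : Fin n) (t : ℝ) {k : ℕ} (hk : k ≤ L.T j)
    (h0 : (k : ℝ) < yf (L.T j) t) (h1 : yf (L.T j) t ≤ k + 1) :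
    PUp L k j t ∨ PDown L k j t ∨ PCap L k j t := by
  have hX := Xf_eq L j (lt_of_le_of_lt hk (L.T_lt j (Finset.mem_univ j))) h0.le h1
  have hu := uf_sq (L.T j) t
  rcases hk.lt_or_eq with hlt | heq
  · have hlt' : ((k + 1 : ℕ) : ℝ) ≤ L.T j := by exact_mod_cast hlt
    push_cast at hlt'
    have hu1 : 1 ≤ uf (L.T j) t ^ 2 := by linarith
    rcases lt_trichotomy t (1 / 2) with h | h | h
    · left
      have := uf_neg (T := L.T j) h
      have hb := bf_zero (T := L.T j) (t := t) (by nlinarith)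
      refine ⟨hlt, h, ?_⟩
      rw [xf, hb, hX]; ring
    · rw [h, uf_half] at hu1
      norm_num at hu1
    · right; left
      have := uf_pos (T := L.T j) h
      have hb := bf_one (T := L.T j) (t := t) (by nlinarith)
      refine ⟨hlt, h, ?_⟩
      rw [xf, hb]; ring
  · right; right
    have hc := (cap_of_T L j).2.2
    have hT : (k : ℝ) = L.T j := by rw [heq]
    have hu1 : uf (L.T j) t ^ 2 < 1 := by linarith
    refine ⟨heq, ?_, ?_, ?_⟩
    · apply Real.smoothTransition.pos_of_pos
      nlinarith
    · apply Real.smoothTransition.lt_one_of_lt_one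
      nlinarith
    · rw [xf, hX, heq, hc]; ring

end arcs

section coincidences

variable {n : ℕ} {σ : Equiv.Perm (Fin n)} {P0 : Fin n → ℤ} {c : ℕ}

theorem outp_inj {i j : Fin n} (h : outp σ i = outp σ j) : i = j := by
  unfold outp at h
  apply σ.injective
  apply Fin.ext
  omega

theorem up_bounds {a b : ℤ} {s x : ℝ} (h0 : 0 ≤ s) (h1 : s ≤ 1) (h : x = a + ((b : ℝ) - a) * s) :
    ((min a b : ℤ) : ℝ) ≤ x ∧ x ≤ ((max a b : ℤ) : ℝ) := by
  rcases le_total a b with hab | hab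
  · rw [min_eq_left hab, max_eq_right hab]
    have : (a : ℝ) ≤ b := by exact_mod_cast hab
    constructor <;> nlinarith
  · rw [min_eq_right hab, max_eq_left hab]
    have : (b : ℝ) ≤ a := by exact_mod_cast hab
    constructor <;> nlinarith

theorem not_between {a b m : ℤ} {s x : ℝ} (h0 : 0 ≤ s) (h1 : s ≤ 1)
    (h : x = a + ((b : ℝ) - a) * s) (hm : m < min a b ∨ max a b < m) : x ≠ m := by
  obtain ⟨h2, h3⟩ := up_bounds h0 h1 h
  intro e
  rw [e] at h2 h3
  have h2' : min a b ≤ m := by exact_mod_cast h2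
  have h3' : m ≤ max a b := by exact_mod_cast h3
  omega

theorem P_ne_outp (L : Plan σ Finset.univ P0 c) (k : ℕ) (i j : Fin n) : L.P k i ≠ outp σ j := by
  obtain ⟨⟨m, hm⟩, _⟩ := L.rng k i
  unfold outp
  omega

theorem PDown_PDown (L : Plan σ Finset.univ P0 c) {k : ℕ} {j j' : Fin n} {t t' : ℝ}
    (h : PDown L k j t) (h' : PDown L k j' t') (hx : xf L j t = xf L j' t')
    (hy : yf (L.T j) t = yf (L.T j') t') : j = j' ∧ t = t' := by
  obtain ⟨_, h1, h2⟩ := h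
  obtain ⟨_, h1', h2'⟩ := h'
  rw [h2, h2'] at hx
  have := outp_inj (by exact_mod_cast hx)
  subst this
  refine ⟨rfl, ?_⟩
  rcases yf_inj hy with h | h
  · exact h
  · linarith

theorem PUp_same (L : Plan σ Finset.univ P0 c) {k : ℕ} {j : Fin n} {t t' : ℝ}
    (h : PUp L k j t) (h' : PUp L k j t')
    (hy : yf (L.T j) t = yf (L.T j) t') : t = t' := by
  rcases yf_inj hy with e | e
  · exact e
  · have := h.2.1
    have := h'.2.1
    linarith

theorem mem_act (L : Plan σ Finset.univ P0 c) {k : ℕ} {j : Fin n} (h : k ≤ L.T j) :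
    j ∈ Finset.univ.filter fun j => k ≤ L.T j := by simp [h]

theorem quiet_unique (L : Plan σ Finset.univ P0 c) {k : ℕ} (hk : k < L.K) (hns : k ∉ L.sw)
    {j j' : Fin n} {t t' : ℝ} (hj : k ≤ L.T j) (hj' : k ≤ L.T j')
    (h0 : (k : ℝ) < yf (L.T j) t) (h1 : yf (L.T j) t ≤ k + 1)
    (hx : xf L j t = xf L j' t') (hy : yf (L.T j) t = yf (L.T j') t') : j = j' ∧ t = t' := by
  have hK := kind L j t hj h0 h1
  have hK' := kind L j' t' hj' (hy ▸ h0) (hy ▸ h1)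
  have hinj : ∀ a b, k ≤ L.T a → k ≤ L.T b → L.P k a = L.P k b → a = b := by
    intro a b ha hb hab
    exact L.inj k hk (by exact_mod_cast mem_act L ha) (by exact_mod_cast mem_act L hb) hab
  rcases L.quiet k hk hns with ⟨⟨q, hq, hm1, hm2, hm3⟩, hT⟩ | ⟨i, _, hi, hpi, hP, hT⟩
  · -- moving step
    -- an up passage is either the mover or stationary
    have hup : ∀ a s, PUp L k a s → a = q ∨ (a ≠ q ∧ xf L a s = L.P k a) := by
      intro a s h
      by_cases haq : a = q
      · exact Or.inl haq
      · refine Or.inr ⟨haq, ?_⟩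
        rw [h.2.2, hm1 a (mem_act L h.1.le) haq]; ring
    have hud : ∀ a s b s', PUp L k a s → PDown L k b s' → xf L a s ≠ xf L b s' := by
      intro a s b s' ha hb e
      rcases hup a s ha with rfl | ⟨hne, hx⟩
      · rw [hb.2.2] at e
        exact not_between (Real.smoothTransition.nonneg _) (Real.smoothTransition.le_one _)
          ha.2.2 (hm3 b (mem_act L hb.1.le)) e
      · rw [hx, hb.2.2] at e
        exact P_ne_outp L k a b (by exact_mod_cast e)
    have huu : ∀ a s b s', PUp L k a s → PUp L k b s' → a = q → b ≠ q → xf L a s ≠ xf L b s' := by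
      rintro a s b s' ha hb rfl hbq e
      rcases hup b s' hb with h | ⟨_, hx⟩
      · exact hbq h
      · rw [hx] at e
        exact not_between (Real.smoothTransition.nonneg _) (Real.smoothTransition.le_one _)
          ha.2.2 (hm2 b (mem_act L hb.1.le) hbq) e
    rcases hK with h | h | h
    · rcases hK' with h' | h' | h'
      · have hjj : j = j' := by
          rcases hup j t h with h2 | ⟨h2, h3⟩
          · by_cases h4 : j' = q
            · rw [h2, h4]
            · exact absurd hx (huu j t j' t' h h' h2 h4)
          · rcases hup j' t' h' with h2' | ⟨h2', h3'⟩
            · exact absurd hx.symm (huu j' t' j t h' h h2' h2)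
            · rw [h3, h3'] at hx
              exact hinj _ _ hj hj' (by exact_mod_cast hx)
        subst hjj
        exact ⟨rfl, PUp_same L h h' hy⟩
      · exact absurd hx (hud _ _ _ _ h h')
      · exact absurd h'.1.symm (hT _ (Finset.mem_univ _))
    · rcases hK' with h' | h' | h'
      · exact absurd hx.symm (hud _ _ _ _ h' h)
      · exact PDown_PDown L h h' hx hy
      · exact absurd h'.1.symm (hT _ (Finset.mem_univ _))
    · exact absurd h.1.symm (hT _ (Finset.mem_univ _))
  · -- cap step
    have hup : ∀ a s, PUp L k a s → xf L a s = L.P k a := by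
      intro a s h
      rw [h.2.2, hP]; ring
    have hcap : ∀ a s, PCap L k a s → ∀ m : ℤ, xf L a s ≠ m := by
      intro a s h m e
      have := hT a (Finset.mem_univ _) h.1.symm
      subst this
      obtain ⟨_, b0, b1, hx⟩ := h
      rw [hx] at e
      rcases hpi with h2 | h2
      · rw [h2] at e
        push_cast at e
        have l1 : ((outp σ a - 1 : ℤ) : ℝ) < m := by push_cast; linarith
        have l2 : (m : ℝ) < (outp σ a : ℤ) := by linarith
        have l1' : outp σ a - 1 < m := by exact_mod_cast l1
        have l2' : m < outp σ a := by exact_mod_cast l2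
        omega
      · rw [h2] at e
        push_cast at e
        have l1 : (m : ℝ) < ((outp σ a + 1 : ℤ) : ℝ) := by push_cast; linarith
        have l2 : ((outp σ a : ℤ) : ℝ) < m := by linarith
        have l1' : m < outp σ a + 1 := by exact_mod_cast l1
        have l2' : outp σ a < m := by exact_mod_cast l2
        omega
    rcases hK with h | h | h
    · rcases hK' with h' | h' | h'
      · rw [hup _ _ h, hup _ _ h'] at hx
        have hjj := hinj _ _ hj hj' (by exact_mod_cast hx)
        subst hjj
        exact ⟨rfl, PUp_same L h h' hy⟩
      · rw [hup _ _ h, h'.2.2] at hx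
        exact absurd (by exact_mod_cast hx) (P_ne_outp L k j j')
      · rw [hup _ _ h] at hx
        exact absurd hx.symm (hcap _ _ h' _)
    · rcases hK' with h' | h' | h'
      · rw [hup _ _ h', h.2.2] at hx
        exact absurd (by exact_mod_cast hx.symm) (P_ne_outp L k j' j)
      · exact PDown_PDown L h h' hx hy
      · rw [h.2.2] at hx
        exact absurd hx.symm (hcap _ _ h' _)
    · rcases hK' with h' | h' | h'
      · rw [hup _ _ h'] at hx
        exact absurd hx (hcap _ _ h _)
      · rw [h'.2.2] at hx
        exact absurd hx (hcap _ _ h _)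
      · have e1 := hT j (Finset.mem_univ _) h.1.symm
        have e2 := hT j' (Finset.mem_univ _) h'.1.symm
        subst e1
        subst e2
        refine ⟨rfl, ?_⟩
        rcases yf_inj hy with e | e
        · exact e
        · rw [h.2.2.2, h'.2.2.2, e, bf_symm] at hx
          have hd : (L.P k j' : ℝ) - outp σ j' ≠ 0 := by
            intro h5
            exact P_ne_outp L k j' j' (by exact_mod_cast sub_eq_zero.1 h5)
          have : ((L.P k j' : ℝ) - outp σ j') * (1 - 2 * bf (L.T j') t) = 0 := by
            linear_combination hx
          have h6 := (mul_eq_zero.1 this).resolve_left hd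
          have h7 : t = 1 / 2 := bf_eq_half (T := L.T j') (by linarith)
          rw [e, h7]; norm_num

/-- The data of a swap step. -/
def SwapData (L : Plan σ Finset.univ P0 c) (k : ℕ) (p q o : Fin n) : Prop :=
  k < L.T p ∧ k < L.T q ∧ k < L.T o ∧ L.P k p = outp σ o - 1 ∧ L.P k q = outp σ o + 1 ∧
    L.P (k + 1) p = outp σ o + 1 ∧ L.P (k + 1) q = outp σ o - 1 ∧
    (∀ j, k < L.T j → j ≠ p → j ≠ q → L.P (k + 1) j = L.P k j)

theorem swapData_exists (L : Plan σ Finset.univ P0 c) {k : ℕ} (hk : k ∈ L.sw) :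
    ∃ p q o, SwapData L k p q o := by
  obtain ⟨⟨p, hp, q, hq, o, ho, h1, h2, h3, h4, h5⟩, hT⟩ := L.swap k hk
  have hT' : ∀ j, k ≤ L.T j → k < L.T j := fun j hj =>
    lt_of_le_of_ne hj (hT j (Finset.mem_univ j)).symm
  simp only [Finset.mem_filter, Finset.mem_univ, true_and] at hp hq ho h5
  exact ⟨p, q, o, hT' p hp, hT' q hq, hT' o ho, h1, h2, h3, h4, fun j hj => h5 j hj.le⟩

theorem up_swap (L : Plan σ Finset.univ P0 c) {k : ℕ} {p q o : Fin n} (hd : SwapData L k p q o)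
    {a : Fin n} {s : ℝ} (h : PUp L k a s) :
    (a = p ∧ xf L a s = outp σ o - 1 + 2 * Real.smoothTransition (yf (L.T a) s - k)) ∨
    (a = q ∧ xf L a s = outp σ o + 1 - 2 * Real.smoothTransition (yf (L.T a) s - k)) ∨
    (a ≠ p ∧ a ≠ q ∧ xf L a s = L.P k a) := by
  obtain ⟨hp, hq, ho, h1, h2, h3, h4, h5⟩ := hd
  by_cases hap : a = p
  · left
    refine ⟨hap, ?_⟩
    rw [h.2.2, hap, h1, h3]; push_cast; ring
  · by_cases haq : a = q
    · right; left
      refine ⟨haq, ?_⟩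
      rw [h.2.2, haq, h2, h4]; push_cast; ring
    · right; right
      refine ⟨hap, haq, ?_⟩
      rw [h.2.2, h5 a h.1 hap haq]; ring

theorem st_sub_half {y : ℝ} {k : ℕ} (h : Real.smoothTransition (y - k) = 1 / 2) :
    y = k + 1 / 2 := by
  have := st_eq_half h
  linarith

theorem swap_coincide (L : Plan σ Finset.univ P0 c) {k : ℕ} (hk : k ∈ L.sw) {p q o : Fin n}
    (hd : SwapData L k p q o)
    {j j' : Fin n} {t t' : ℝ} (hj : k ≤ L.T j) (hj' : k ≤ L.T j')
    (h0 : (k : ℝ) < yf (L.T j) t) (h1 : yf (L.T j) t ≤ k + 1)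
    (hx : xf L j t = xf L j' t') (hy : yf (L.T j) t = yf (L.T j') t') :
    (j = j' ∧ t = t') ∨ (yf (L.T j) t = k + 1 / 2 ∧ xf L j t = outp σ o) := by
  have hkK := L.sw_lt k hk
  have hT := (L.swap k hk).2
  have hK := kind L j t hj h0 h1
  have hK' := kind L j' t' hj' (hy ▸ h0) (hy ▸ h1)
  have hinj : ∀ a b, k ≤ L.T a → k ≤ L.T b → L.P k a = L.P k b → a = b := by
    intro a b ha hb hab
    exact L.inj k hkK (by exact_mod_cast mem_act L ha) (by exact_mod_cast mem_act L hb) hab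
  obtain ⟨hp, hq, ho, g1, g2, g3, g4, g5⟩ := id hd
  -- an integer within distance one of the out position
  have near : ∀ (S : ℝ) (m : ℤ), 0 ≤ S → S ≤ 1 →
      ((outp σ o : ℝ) - 1 + 2 * S = m ∨ (outp σ o : ℝ) + 1 - 2 * S = m) →
      outp σ o - 1 ≤ m ∧ m ≤ outp σ o + 1 := by
    intro S m s0 s1 h
    have l1 : ((outp σ o - 1 : ℤ) : ℝ) ≤ m := by
      push_cast; rcases h with h | h <;> linarith
    have l2 : (m : ℝ) ≤ ((outp σ o + 1 : ℤ) : ℝ) := by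
      push_cast; rcases h with h | h <;> linarith
    exact ⟨by exact_mod_cast l1, by exact_mod_cast l2⟩
  -- mover against stationary strand
  have mo_st : ∀ (S : ℝ) a, 0 ≤ S → S ≤ 1 → k ≤ L.T a → a ≠ p → a ≠ q →
      ¬ ((outp σ o : ℝ) - 1 + 2 * S = L.P k a ∨ (outp σ o : ℝ) + 1 - 2 * S = L.P k a) := by
    intro S a s0 s1 ha hap haq h
    obtain ⟨n1, n2⟩ := near S _ s0 s1 h
    have n3 := P_ne_outp L k a o
    have : L.P k a = L.P k p ∨ L.P k a = L.P k q := by omega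
    rcases this with h | h
    · exact hap (hinj _ _ ha hp.le h)
    · exact haq (hinj _ _ ha hq.le h)
  -- mover against out strand
  have mo_ou : ∀ (S : ℝ) a, 0 ≤ S → S ≤ 1 →
      ((outp σ o : ℝ) - 1 + 2 * S = outp σ a ∨ (outp σ o : ℝ) + 1 - 2 * S = outp σ a) →
      S = 1 / 2 ∧ outp σ a = outp σ o := by
    intro S a s0 s1 h
    obtain ⟨n1, n2⟩ := near S _ s0 s1 h
    have : outp σ a = outp σ o := by unfold outp at *; omega
    refine ⟨?_, this⟩
    rw [this] at h
    rcases h with h | h <;> linarith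
  set S := Real.smoothTransition (yf (L.T j) t - k) with hS
  have s0 : 0 ≤ S := Real.smoothTransition.nonneg _
  have s1 : S ≤ 1 := Real.smoothTransition.le_one _
  have hfin : S = 1 / 2 → yf (L.T j) t = k + 1 / 2 := fun h => st_sub_half h
  rcases hK with h | h | h
  · rcases hK' with h' | h' | h'
    · have cj := up_swap L hd h
      have cj' := up_swap L hd h'
      rw [← hy, ← hS] at cj'
      rw [← hS] at cj
      by_cases hjj : j = j'
      · subst hjj
        exact Or.inl ⟨rfl, PUp_same L h h' hy⟩
      rcases cj with ⟨a1, a2⟩ | ⟨a1, a2⟩ | ⟨a1, a2, a3⟩ <;>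
        rcases cj' with ⟨b1, b2⟩ | ⟨b1, b2⟩ | ⟨b1, b2, b3⟩
      · exact absurd (a1.trans b1.symm) hjj
      · right
        have : S = 1 / 2 := by linarith
        exact ⟨hfin this, by rw [a2, this]; ring⟩
      · exact absurd (Or.inl (by linarith)) (mo_st S j' s0 s1 hj' b1 b2)
      · right
        have : S = 1 / 2 := by linarith
        exact ⟨hfin this, by rw [a2, this]; ring⟩
      · exact absurd (a1.trans b1.symm) hjj
      · exact absurd (Or.inr (by linarith)) (mo_st S j' s0 s1 hj' b1 b2)
      · exact absurd (Or.inl (by linarith)) (mo_st S j s0 s1 hj a1 a2)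
      · exact absurd (Or.inr (by linarith)) (mo_st S j s0 s1 hj a1 a2)
      · rw [a3, b3] at hx
        exact absurd (hinj _ _ hj hj' (by exact_mod_cast hx)) hjj
    · have cj := up_swap L hd h
      rw [← hS] at cj
      right
      have e := h'.2.2
      rcases cj with ⟨a1, a2⟩ | ⟨a1, a2⟩ | ⟨a1, a2, a3⟩
      · obtain ⟨m1, m2⟩ := mo_ou S j' s0 s1 (Or.inl (by linarith))
        exact ⟨hfin m1, by rw [hx, e, m2]⟩
      · obtain ⟨m1, m2⟩ := mo_ou S j' s0 s1 (Or.inr (by linarith))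
        exact ⟨hfin m1, by rw [hx, e, m2]⟩
      · rw [a3, e] at hx
        exact absurd (by exact_mod_cast hx) (P_ne_outp L k j j')
    · exact absurd h'.1.symm (hT _ (Finset.mem_univ _))
  · rcases hK' with h' | h' | h'
    · have cj := up_swap L hd h'
      rw [← hy, ← hS] at cj
      right
      have e := h.2.2
      rcases cj with ⟨a1, a2⟩ | ⟨a1, a2⟩ | ⟨a1, a2, a3⟩
      · obtain ⟨m1, m2⟩ := mo_ou S j s0 s1 (Or.inl (by linarith))
        exact ⟨hfin m1, by rw [e, m2]⟩
      · obtain ⟨m1, m2⟩ := mo_ou S j s0 s1 (Or.inr (by linarith))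
        exact ⟨hfin m1, by rw [e, m2]⟩
      · rw [a3, e] at hx
        exact absurd (by exact_mod_cast hx.symm) (P_ne_outp L k j' j)
    · exact Or.inl (PDown_PDown L h h' hx hy)
    · exact absurd h'.1.symm (hT _ (Finset.mem_univ _))
  · exact absurd h.1.symm (hT _ (Finset.mem_univ _))

end coincidences

section diagram

variable {n : ℕ} {σ : Equiv.Perm (Fin n)} {P0 : Fin n → ℤ} {c : ℕ}

theorem outp_bounds (j : Fin n) : (0 : ℝ) ≤ outp σ j ∧ (outp σ j : ℝ) ≤ 2 * n - 1 := by
  have h := (σ j).isLt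
  have h1 : 0 ≤ outp σ j := by unfold outp; omega
  have h2 : outp σ j ≤ 2 * (n : ℤ) - 1 := by unfold outp; omega
  refine ⟨by exact_mod_cast h1, ?_⟩
  have : (outp σ j : ℝ) ≤ ((2 * (n : ℤ) - 1 : ℤ) : ℝ) := by exact_mod_cast h2
  push_cast at this
  exact this

theorem P_bounds (L : Plan σ Finset.univ P0 c) (k : ℕ) (j : Fin n) :
    (0 : ℝ) ≤ L.P k j ∧ (L.P k j : ℝ) ≤ 2 * n - 1 := by
  obtain ⟨_, h1, h2⟩ := L.rng k j
  refine ⟨by exact_mod_cast h1, ?_⟩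
  have : (L.P k j : ℝ) ≤ ((2 * (n : ℤ) - 2 : ℤ) : ℝ) := by exact_mod_cast h2
  push_cast at this
  linarith

theorem conv_bounds {a b s M : ℝ} (s0 : 0 ≤ s) (s1 : s ≤ 1) (ha : 0 ≤ a ∧ a ≤ M)
    (hb : 0 ≤ b ∧ b ≤ M) : 0 ≤ (1 - s) * a + s * b ∧ (1 - s) * a + s * b ≤ M := by
  obtain ⟨a0, a1⟩ := ha
  obtain ⟨b0, b1⟩ := hb
  have s2 : 0 ≤ 1 - s := by linarith
  constructor
  · positivity
  · nlinarith

theorem xf_bounds (L : Plan σ Finset.univ P0 c) (j : Fin n) {t : ℝ} (ht : t ∈ Icc (0 : ℝ) 1) :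
    0 ≤ xf L j t ∧ xf L j t ≤ 2 * n - 1 := by
  have hy0 := yf_nonneg (T := L.T j) ht
  have hy1 := yf_le (L.T j) t
  have hTK := L.T_lt j (Finset.mem_univ j)
  have : ∃ k : ℕ, k < L.K ∧ (k : ℝ) ≤ yf (L.T j) t ∧ yf (L.T j) t ≤ k + 1 := by
    rcases hy0.eq_or_lt with h | h
    · exact ⟨0, by omega, by rw [← h]; simp, by rw [← h]; norm_num⟩
    · obtain ⟨k, hk, h1, h2⟩ := exists_k h hy1
      exact ⟨k, by omega, h1.le, h2⟩
  obtain ⟨k, hk, h1, h2⟩ := this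
  unfold xf
  apply conv_bounds (bf_nonneg _ _) (bf_le_one _ _) _ (outp_bounds j)
  rw [Xf_eq L j hk h1 h2]
  have := conv_bounds (Real.smoothTransition.nonneg (yf (L.T j) t - k))
    (Real.smoothTransition.le_one (yf (L.T j) t - k)) (P_bounds L k j) (P_bounds L (k + 1) j)
  constructor
  · linarith [this.1]
  · linarith [this.2]

theorem yf_contDiff (T : ℕ) : ContDiff ℝ (⊤ : ℕ∞) (yf T) := by
  unfold yf; fun_prop

theorem uf_contDiff (T : ℕ) : ContDiff ℝ (⊤ : ℕ∞) (uf T) := by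
  unfold uf; fun_prop

theorem st_contDiff : ContDiff ℝ (⊤ : ℕ∞) Real.smoothTransition := Real.smoothTransition.contDiff

theorem bf_contDiff (T : ℕ) : ContDiff ℝ (⊤ : ℕ∞) (bf T) :=
  st_contDiff.comp ((contDiff_const.add (uf_contDiff T)).div_const 2)

theorem Xf_contDiff (L : Plan σ Finset.univ P0 c) (j : Fin n) :
    ContDiff ℝ (⊤ : ℕ∞) (Xf L j) := by
  unfold Xf
  refine contDiff_const.add (ContDiff.sum fun k _ => contDiff_const.mul ?_)
  exact st_contDiff.comp (contDiff_id.sub contDiff_const)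

theorem xf_contDiff (L : Plan σ Finset.univ P0 c) (j : Fin n) :
    ContDiff ℝ (⊤ : ℕ∞) (xf L j) := by
  unfold xf
  exact ((contDiff_const.sub (bf_contDiff _)).mul ((Xf_contDiff L j).comp (yf_contDiff _))).add
    ((bf_contDiff _).mul contDiff_const)

theorem arcf_contDiff (L : Plan σ Finset.univ P0 c) (j : Fin n) :
    ContDiff ℝ (⊤ : ℕ∞) (arcf L j) :=
  Em_contDiff n (xf_contDiff L j) (yf_contDiff _)

theorem yf_deriv (T : ℕ) (t : ℝ) : HasDerivAt (yf T) (4 * (T + 1) * (1 - 2 * t)) t := by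
  have h1 := (hasDerivAt_id t).const_mul (4 * (T + 1 : ℝ))
  have h2 := (hasDerivAt_id t).const_sub 1
  have := h1.mul h2
  refine HasDerivAt.congr_deriv (f := yf T) this ?_
  simp; ring

theorem arcf_deriv (L : Plan σ Finset.univ P0 c) (j : Fin n) {t a : ℝ}
    (h : HasDerivAt (xf L j) a t) :
    deriv (arcf L j) t = tv n (xf L j t) (yf (L.T j) t) a (4 * (L.T j + 1) * (1 - 2 * t)) :=
  (Em_deriv n h (yf_deriv _ t)).deriv

theorem xf_hasDeriv (L : Plan σ Finset.univ P0 c) (j : Fin n) (t : ℝ) :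
    HasDerivAt (xf L j) (deriv (xf L j) t) t :=
  ((xf_contDiff L j).differentiable (by simp)).differentiableAt.hasDerivAt

theorem xf_deriv_half (L : Plan σ Finset.univ P0 c) (j : Fin n) :
    ∃ a, a ≠ 0 ∧ HasDerivAt (xf L j) a (1 / 2) := by
  obtain ⟨s, hs, hd⟩ := st_deriv
  have hu : HasDerivAt (fun t : ℝ => (1 + uf (L.T j) t) / 2) (√(L.T j + 1 : ℝ)) (1 / 2) := by
    have h1 : HasDerivAt (fun t : ℝ => 2 * t - 1) 2 (1 / 2) := by
      simpa using ((hasDerivAt_id (1 / 2 : ℝ)).const_mul 2).sub_const 1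
    have h2 := ((h1.const_mul (√(L.T j + 1 : ℝ))).const_add 1).div_const 2
    refine HasDerivAt.congr_deriv (f := fun t : ℝ => (1 + uf (L.T j) t) / 2) h2 ?_
    ring
  have hb : HasDerivAt (bf (L.T j)) (s * √(L.T j + 1 : ℝ)) (1 / 2) := by
    have e : (1 + uf (L.T j) (1 / 2)) / 2 = 1 / 2 := by rw [uf_half]; norm_num
    exact HasDerivAt.comp (1 / 2 : ℝ) (by rw [e]; exact hd) hu
  have hX : HasDerivAt (fun t => Xf L j (yf (L.T j) t)) 0 (1 / 2) := by
    have h1 : HasDerivAt (Xf L j) (deriv (Xf L j) (yf (L.T j) (1 / 2))) (yf (L.T j) (1 / 2)) :=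
      ((Xf_contDiff L j).differentiable (by simp)).differentiableAt.hasDerivAt
    refine (HasDerivAt.comp (1 / 2 : ℝ) h1 (yf_deriv (L.T j) (1 / 2))).congr_deriv ?_
    ring
  have hfull := ((hb.const_sub 1).mul hX).add (hb.mul_const (outp σ j : ℝ))
  have hy : yf (L.T j) (1 / 2) = L.T j + 1 := by unfold yf; ring
  obtain ⟨_, hc1, hc2⟩ := cap_of_T L j
  have hXv : Xf L j (yf (L.T j) (1 / 2)) = L.P (L.T j) j := by
    rw [hy, Xf_eq L j (L.T_lt j (Finset.mem_univ j)) (by linarith) le_rfl, hc2]; ring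
  refine ⟨_, ?_, hfull⟩
  have h3 : (outp σ j : ℝ) - L.P (L.T j) j ≠ 0 := by
    intro h
    exact P_ne_outp L _ j j (by exact_mod_cast (sub_eq_zero.1 h).symm)
  have h4 : 0 < √(L.T j + 1 : ℝ) := by have := sqrtT_ge (L.T j); linarith
  have h5 : s * √(L.T j + 1 : ℝ) * ((outp σ j : ℝ) - L.P (L.T j) j) ≠ 0 :=
    mul_ne_zero (by positivity) h3
  rw [hXv]
  intro h
  apply h5
  linear_combination h

theorem arcf_immersed (hn : 1 ≤ n) (L : Plan σ Finset.univ P0 c) (j : Fin n) (t : ℝ) :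
    deriv (arcf L j) t ≠ 0 := by
  intro h
  by_cases ht : t = 1 / 2
  · subst ht
    obtain ⟨a, ha, hd⟩ := xf_deriv_half L j
    rw [arcf_deriv L j hd] at h
    exact ha (tv_eq_zero hn h).1
  · rw [arcf_deriv L j (xf_hasDeriv L j t)] at h
    have h1 := (tv_eq_zero hn h).2
    have h2 : (4 * (L.T j + 1) : ℝ) ≠ 0 := by positivity
    apply ht
    have := (mul_eq_zero.1 h1).resolve_left h2
    linarith

theorem yf_zero (T : ℕ) : yf T 0 = 0 := by unfold yf; ring
theorem yf_one (T : ℕ) : yf T 1 = 0 := by unfold yf; ring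

theorem xf_zero (L : Plan σ Finset.univ P0 c) (j : Fin n) : xf L j 0 = P0 j := by
  have h : uf (L.T j) 0 ≤ -1 := by
    have := sqrtT_ge (L.T j)
    unfold uf; linarith
  have h2 : 0 < L.K := lt_of_le_of_lt (Nat.zero_le _) (L.T_lt j (Finset.mem_univ j))
  rw [xf, bf_zero h, yf_zero, Xf_eq L j h2 (by simp) (by norm_num),
    Real.smoothTransition.zero_of_nonpos (by simp), L.P_zero]
  ring

theorem xf_one (L : Plan σ Finset.univ P0 c) (j : Fin n) : xf L j 1 = outp σ j := by
  have h : 1 ≤ uf (L.T j) 1 := by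
    have := sqrtT_ge (L.T j)
    unfold uf; linarith
  rw [xf, bf_one h]
  ring

theorem arcf_norm (L : Plan σ Finset.univ P0 c) (j : Fin n) (t : ℝ) :
    ‖arcf L j t‖ = Real.exp (-yf (L.T j) t) := Em_norm _ _ _

noncomputable def preD (hn : 1 ≤ n) (L : Plan σ Finset.univ (fun j => 2 * ((j : ℕ) : ℤ)) c) :
    PreDiagram n 0 where
  arc := arcf L
  loop := fun i => i.elim0
  arc_smooth := arcf_contDiff L
  loop_smooth := fun i => i.elim0
  loop_periodic := fun i => i.elim0
  arc_immersed := fun i t _ => arcf_immersed hn L i t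
  loop_immersed := fun i => i.elim0
  arc_in_disk := by
    intro i t ht
    rw [arcf_norm, Real.exp_le_one_iff]
    linarith [yf_nonneg (T := L.T i) ht]
  arc_interior := by
    intro i t ht
    rw [arcf_norm, Real.exp_lt_one_iff]
    linarith [yf_pos (T := L.T i) ht]
  arc_start_bdry := by
    intro i
    rw [arcf_norm, yf_zero]; simp
  arc_end_bdry := by
    intro i
    rw [arcf_norm, yf_one]; simp
  arc_transverse_start := by
    intro i
    rw [arcf_deriv L i (xf_hasDeriv L i 0)]
    unfold arcf
    rw [tv_inner]
    have h2 : (4 * (L.T i + 1) : ℝ) ≠ 0 := by positivity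
    refine mul_ne_zero (by positivity) (neg_ne_zero.2 (mul_ne_zero h2 (by norm_num)))
  arc_transverse_end := by
    intro i
    rw [arcf_deriv L i (xf_hasDeriv L i 1)]
    unfold arcf
    rw [tv_inner]
    have h2 : (4 * (L.T i + 1) : ℝ) ≠ 0 := by positivity
    refine mul_ne_zero (by positivity) (neg_ne_zero.2 (mul_ne_zero h2 (by norm_num)))
  loop_in_disk := fun i => i.elim0
  endpoints_distinct := by
    have z : (0 : ℝ) ∈ Icc (0 : ℝ) 1 := by simp
    have w : (1 : ℝ) ∈ Icc (0 : ℝ) 1 := by simp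
    have key : ∀ i j t t', t ∈ Icc (0 : ℝ) 1 → t' ∈ Icc (0 : ℝ) 1 → arcf L i t = arcf L j t' →
        xf L i t = xf L j t' := fun i j t t' ht ht' h =>
      (Em_inj hn h (xf_bounds L i ht).1 (xf_bounds L i ht).2 (xf_bounds L j ht').1
        (xf_bounds L j ht').2).1
    rintro (i | i) (j | j) h <;> simp only [Sum.elim_inl, Sum.elim_inr] at h
    · have := key _ _ _ _ z z h
      rw [xf_zero, xf_zero] at this
      have h2 : 2 * ((i : ℕ) : ℤ) = 2 * ((j : ℕ) : ℤ) := by exact_mod_cast this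
      rw [show i = j from Fin.ext (by omega)]
    · have := key _ _ _ _ z w h
      rw [xf_zero, xf_one] at this
      have h2 : 2 * ((i : ℕ) : ℤ) = outp σ j := by exact_mod_cast this
      unfold outp at h2; omega
    · have := key _ _ _ _ w z h
      rw [xf_zero, xf_one] at this
      have h2 : outp σ i = 2 * ((j : ℕ) : ℤ) := by exact_mod_cast this
      unfold outp at h2; omega
    · have := key _ _ _ _ w w h
      rw [xf_one, xf_one] at this
      rw [outp_inj (show outp σ i = outp σ j by exact_mod_cast this)]

end diagram

section triple

variable {n : ℕ} {σ : Equiv.Perm (Fin n)} {P0 : Fin n → ℤ} {c : ℕ}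

theorem exists_up {T : ℕ} {y : ℝ} (h0 : 0 < y) (h1 : y < T + 1) :
    ∃ t : ℝ, 0 < t ∧ t < 1 / 2 ∧ yf T t = y := by
  have hT : (0 : ℝ) < T + 1 := by positivity
  have hv0 : 0 < 1 - y / (T + 1) := by
    have : y / (T + 1) < 1 := (div_lt_one hT).2 h1
    linarith
  have hv1 : 1 - y / (T + 1) < 1 := by
    have : 0 < y / (T + 1) := by positivity
    linarith
  have r0 : 0 < √(1 - y / (T + 1)) := Real.sqrt_pos.2 hv0
  have r1 : √(1 - y / (T + 1)) < 1 := by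
    rw [Real.sqrt_lt' one_pos]; simpa using hv1
  refine ⟨(1 - √(1 - y / (T + 1))) / 2, by linarith, by linarith, ?_⟩
  have hsq : √(1 - y / (T + 1)) ^ 2 = 1 - y / (T + 1) := Real.sq_sqrt hv0.le
  have e : (T + 1 : ℝ) * (y / (T + 1)) = y := by field_simp
  unfold yf
  linear_combination (-(T + 1 : ℝ)) * hsq + e

theorem yf_symm (T : ℕ) (t : ℝ) : yf T (1 - t) = yf T t := by unfold yf; ring

/-- Derivative of the horizontal coordinate at an upward passage. -/
theorem up_deriv (L : Plan σ Finset.univ P0 c) {k : ℕ} {j : Fin n} {t s : ℝ} (hk : k < L.T j)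
    (ht : t < 1 / 2) (hy : yf (L.T j) t = k + 1 / 2)
    (hs : HasDerivAt Real.smoothTransition s (1 / 2)) :
    HasDerivAt (xf L j) (((L.P (k + 1) j : ℝ) - L.P k j) *
      (s * (4 * (L.T j + 1) * (1 - 2 * t)))) t := by
  have hkK : k < L.K := hk.trans (L.T_lt j (Finset.mem_univ j))
  have hlt' : ((k + 1 : ℕ) : ℝ) ≤ L.T j := by exact_mod_cast hk
  push_cast at hlt'
  have hu : uf (L.T j) t < -1 := by
    have h1 := uf_sq (L.T j) t
    have h2 := uf_neg (T := L.T j) ht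
    by_contra h3
    nlinarith
  have c1 := (uf_contDiff (L.T j)).continuous.continuousAt.eventually_lt_const hu
  have c2 := (yf_contDiff (L.T j)).continuous.continuousAt.eventually_lt_const
    (show yf (L.T j) t < k + 1 by rw [hy]; linarith)
  have c3 := (yf_contDiff (L.T j)).continuous.continuousAt.eventually_const_lt
    (show (k : ℝ) < yf (L.T j) t by rw [hy]; linarith)
  have h1 : HasDerivAt (fun t => yf (L.T j) t - k) (4 * (L.T j + 1) * (1 - 2 * t)) t :=
    (yf_deriv _ t).sub_const _
  have hs' : HasDerivAt Real.smoothTransition s (yf (L.T j) t - k) := by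
    rw [hy]; simpa using hs
  have h2 := ((HasDerivAt.comp t hs' h1).const_mul ((L.P (k + 1) j : ℝ) - L.P k j)).const_add
    (L.P k j : ℝ)
  apply h2.congr_of_eventuallyEq
  filter_upwards [c1, c2, c3] with r r1 r2 r3
  rw [xf, bf_zero r1.le, Xf_eq L j hkK r3.le r2.le]
  simp

theorem down_deriv (L : Plan σ Finset.univ P0 c) {k : ℕ} {j : Fin n} {t : ℝ} (hk : k < L.T j)
    (ht : 1 / 2 < t) (hy : yf (L.T j) t = k + 1 / 2) :
    HasDerivAt (xf L j) 0 t := by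
  have hlt' : ((k + 1 : ℕ) : ℝ) ≤ L.T j := by exact_mod_cast hk
  push_cast at hlt'
  have hu : 1 < uf (L.T j) t := by
    have h1 := uf_sq (L.T j) t
    have h2 := uf_pos (T := L.T j) ht
    by_contra h3
    nlinarith
  have c1 := (uf_contDiff (L.T j)).continuous.continuousAt.eventually_const_lt hu
  apply (hasDerivAt_const t (outp σ j : ℝ)).congr_of_eventuallyEq
  filter_upwards [c1] with r r1
  rw [xf, bf_one r1.le]
  ring

/-- Full description of a swap point. -/
theorem swap_point (hn : 1 ≤ n) (L : Plan σ Finset.univ P0 c) {k : ℕ} (hk : k ∈ L.sw)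
    {p q o : Fin n} (hd : SwapData L k p q o) :
    ∃ tp tq wo : ℝ, p ≠ q ∧ tp ∈ Ioo (0 : ℝ) 1 ∧ tq ∈ Ioo (0 : ℝ) 1 ∧ wo ∈ Ioo (0 : ℝ) 1 ∧
      tp < 1 / 2 ∧ tq < 1 / 2 ∧ 1 / 2 < wo ∧
      (∀ j t, (t ∈ Ioo (0 : ℝ) 1 ∧ arcf L j t = Em n (outp σ o) (k + 1 / 2)) ↔
        (j, t) = (p, tp) ∨ (j, t) = (q, tq) ∨ (j, t) = (o, wo)) ∧
      ∃ s y1 y2 y3 : ℝ, 0 < s ∧ 0 < y1 ∧ 0 < y2 ∧ 0 < y3 ∧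
        deriv (arcf L p) tp = tv n (outp σ o) (k + 1 / 2) (s * y1) y1 ∧
        deriv (arcf L q) tq = tv n (outp σ o) (k + 1 / 2) (-(s * y2)) y2 ∧
        deriv (arcf L o) wo = tv n (outp σ o) (k + 1 / 2) 0 (-y3) := by
  obtain ⟨hp, hq, ho, g1, g2, g3, g4, g5⟩ := id hd
  have hT := (L.swap k hk).2
  have hyT : ∀ j, k < L.T j → (k : ℝ) + 1 / 2 < L.T j + 1 := by
    intro j hj
    have hlt' : ((k + 1 : ℕ) : ℝ) ≤ L.T j := by exact_mod_cast hj
    push_cast at hlt'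
    linarith
  have hy0 : (0 : ℝ) < k + 1 / 2 := by positivity
  obtain ⟨tp, p0, p1, py⟩ := exists_up hy0 (hyT p hp)
  obtain ⟨tq, q0, q1, qy⟩ := exists_up hy0 (hyT q hq)
  obtain ⟨wo0, o0, o1, oy'⟩ := exists_up hy0 (hyT o ho)
  set wo := 1 - wo0 with hto
  have oy : yf (L.T o) wo = k + 1 / 2 := by rw [hto, yf_symm, oy']
  have hpq : p ≠ q := by
    rintro rfl
    omega
  have ip : tp ∈ Ioo (0 : ℝ) 1 := ⟨p0, by linarith⟩
  have iq : tq ∈ Ioo (0 : ℝ) 1 := ⟨q0, by linarith⟩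
  have hwo : wo ∈ Ioo (0 : ℝ) 1 := ⟨by linarith, by linarith⟩
  have ho2 : 1 / 2 < wo := by linarith
  -- kinds of passages at this level
  have kd : ∀ j t, k ≤ L.T j → yf (L.T j) t = k + 1 / 2 → PUp L k j t ∨ PDown L k j t := by
    intro j t hj hy
    rcases kind L j t hj (by rw [hy]; linarith) (by rw [hy]; linarith) with h | h | h
    · exact Or.inl h
    · exact Or.inr h
    · exact absurd h.1.symm (hT _ (Finset.mem_univ _))
  have sh : Real.smoothTransition ((k : ℝ) + 1 / 2 - k) = 1 / 2 := by
    rw [add_sub_cancel_left]; exact st_half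
  have upx : ∀ j t, PUp L k j t → yf (L.T j) t = k + 1 / 2 →
      ((j = p ∨ j = q) ∧ xf L j t = outp σ o) ∨ xf L j t = L.P k j := by
    intro j t h hy
    rcases up_swap L hd h with ⟨a1, a2⟩ | ⟨a1, a2⟩ | ⟨a1, a2, a3⟩
    · rw [hy, sh] at a2
      exact Or.inl ⟨Or.inl a1, by rw [a2]; ring⟩
    · rw [hy, sh] at a2
      exact Or.inl ⟨Or.inr a1, by rw [a2]; ring⟩
    · exact Or.inr a3
  have px : xf L p tp = outp σ o := by
    rcases kd p tp hp.le py with h | h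
    · rcases up_swap L hd h with ⟨a1, a2⟩ | ⟨a1, a2⟩ | ⟨a1, a2, a3⟩
      · rw [py, sh] at a2
        rw [a2]; ring
      · exact absurd a1 hpq
      · exact absurd rfl a1
    · linarith [h.2.1]
  have qx : xf L q tq = outp σ o := by
    rcases kd q tq hq.le qy with h | h
    · rcases up_swap L hd h with ⟨a1, a2⟩ | ⟨a1, a2⟩ | ⟨a1, a2, a3⟩
      · exact absurd a1.symm hpq
      · rw [qy, sh] at a2
        rw [a2]; ring
      · exact absurd rfl a2
    · linarith [h.2.1]
  have ox : xf L o wo = outp σ o := by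
    rcases kd o wo ho.le oy with h | h
    · linarith [h.2.1]
    · exact h.2.2
  refine ⟨tp, tq, wo, hpq, ip, iq, hwo, p1, q1, ho2, ?_, ?_⟩
  · intro j t
    constructor
    · rintro ⟨ht, he⟩
      have hb := xf_bounds L j (Ioo_subset_Icc_self ht)
      obtain ⟨hx, hy⟩ := Em_inj hn he hb.1 hb.2 (outp_bounds o).1 (outp_bounds o).2
      have hkj : k ≤ L.T j := by
        have h1 := yf_le (L.T j) t
        rw [hy] at h1
        have : (k : ℝ) < ((L.T j + 1 : ℕ) : ℝ) := by push_cast; linarith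
        have : k < L.T j + 1 := by exact_mod_cast this
        omega
      rcases kd j t hkj hy with h | h
      · rcases upx j t h hy with ⟨hj | hj, _⟩ | h2
        · left
          subst hj
          rcases yf_inj (hy.trans py.symm) with e | e
          · rw [e]
          · linarith [h.2.1]
        · right; left
          subst hj
          rcases yf_inj (hy.trans qy.symm) with e | e
          · rw [e]
          · linarith [h.2.1]
        · rw [h2] at hx
          exact absurd (by exact_mod_cast hx) (P_ne_outp L k j o)
      · right; right
        have h2 := h.2.2
        rw [hx] at h2
        have hj : o = j := outp_inj (σ := σ) (by exact_mod_cast h2)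
        subst hj
        rcases yf_inj (hy.trans oy.symm) with e | e
        · rw [e]
        · linarith [h.2.1]
    · rintro (h | h | h) <;> obtain ⟨rfl, rfl⟩ := Prod.mk.inj h
      · exact ⟨ip, by rw [arcf, px, py]⟩
      · exact ⟨iq, by rw [arcf, qx, qy]⟩
      · exact ⟨hwo, by rw [arcf, ox, oy]⟩
  · obtain ⟨s, hs, hsd⟩ := st_deriv
    have dp := arcf_deriv L p (up_deriv L hp p1 py hsd)
    have dq := arcf_deriv L q (up_deriv L hq q1 qy hsd)
    have dwo := arcf_deriv L o (down_deriv L ho ho2 oy)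
    have TP : (0 : ℝ) < 4 * (L.T p + 1) := by positivity
    have TQ : (0 : ℝ) < 4 * (L.T q + 1) := by positivity
    have TO : (0 : ℝ) < 4 * (L.T o + 1) := by positivity
    refine ⟨2 * s, 4 * (L.T p + 1) * (1 - 2 * tp), 4 * (L.T q + 1) * (1 - 2 * tq),
      4 * (L.T o + 1) * (2 * wo - 1), by positivity, mul_pos TP (by linarith),
      mul_pos TQ (by linarith), mul_pos TO (by linarith), ?_, ?_, ?_⟩
    · rw [dp, px, py, g1, g3]
      congr 1
      push_cast; ring
    · rw [dq, qx, qy, g2, g4]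
      congr 1
      push_cast; ring
    · rw [dwo, ox, oy]
      congr 1
      ring

/-- Distinct passages through a point come from a swap. -/
theorem multi_swap (hn : 1 ≤ n) (L : Plan σ Finset.univ P0 c) {j j' : Fin n} {t t' : ℝ}
    (ht : t ∈ Ioo (0 : ℝ) 1) (ht' : t' ∈ Ioo (0 : ℝ) 1) (h : arcf L j t = arcf L j' t')
    (hne : (j, t) ≠ (j', t')) :
    ∃ k ∈ L.sw, ∀ p q o, SwapData L k p q o → arcf L j t = Em n (outp σ o) (k + 1 / 2) := by
  have hb := xf_bounds L j (Ioo_subset_Icc_self ht)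
  have hb' := xf_bounds L j' (Ioo_subset_Icc_self ht')
  obtain ⟨hx, hy⟩ := Em_inj hn h hb.1 hb.2 hb'.1 hb'.2
  obtain ⟨k, hk, h0, h1⟩ := exists_k (yf_pos (T := L.T j) ht) (yf_le _ t)
  obtain ⟨k', hk', h0', h1'⟩ := exists_k (yf_pos (T := L.T j') ht') (yf_le _ t')
  have hkk := k_unique h0 h1 (hy ▸ h0') (hy ▸ h1')
  subst hkk
  have hkK : k < L.K := lt_of_le_of_lt hk (L.T_lt j (Finset.mem_univ j))
  by_cases hs : k ∈ L.sw
  · refine ⟨k, hs, fun p q o hd => ?_⟩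
    rcases swap_coincide L hs hd hk hk' h0 h1 hx hy with ⟨e1, e2⟩ | ⟨e1, e2⟩
    · exact absurd (by rw [e1, e2]) hne
    · rw [arcf, e1, e2]
  · obtain ⟨e1, e2⟩ := quiet_unique L hkK hs hk hk' h0 h1 hx hy
    exact absurd (by rw [e1, e2]) hne

theorem triple_main (hn : 1 ≤ n) (L : Plan σ Finset.univ (fun j => 2 * ((j : ℕ) : ℤ)) c) :
    ∃ D : TripleDiagram n 0, Realizes D σ ∧ D.tripleCount = c := by
  classical
  have hsd : ∀ k, ∃ p q o, k ∈ L.sw → SwapData L k p q o := by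
    intro k
    by_cases hk : k ∈ L.sw
    · obtain ⟨p, q, o, h⟩ := swapData_exists L hk
      exact ⟨p, q, o, fun _ => h⟩
    · exact ⟨⟨0, hn⟩, ⟨0, hn⟩, ⟨0, hn⟩, fun h => absurd h hk⟩
  choose fp fq fo hf using hsd
  let pt : ℕ → Plane := fun k => Em n (outp σ (fo k)) (k + 1 / 2)
  have hinj : Function.Injective pt := by
    intro k k' h
    have := (Em_inj hn h (outp_bounds _).1 (outp_bounds _).2 (outp_bounds _).1 (outp_bounds _).2).2
    have h2 : (k : ℝ) = k' := by linarith
    exact_mod_cast h2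
  -- description of the passages at a swap point
  have hpass : ∀ k ∈ L.sw, ∃ q₁ q₂ q₃ : (Fin n × ℝ) ⊕ (Fin 0 × ℝ), q₁ ≠ q₂ ∧ q₁ ≠ q₃ ∧ q₂ ≠ q₃ ∧
      (preD hn L).passages (pt k) = {q₁, q₂, q₃} ∧
      ∃ s y1 y2 y3 : ℝ, 0 < s ∧ 0 < y1 ∧ 0 < y2 ∧ 0 < y3 ∧
        (preD hn L).tangent q₁ = tv n (outp σ (fo k)) (k + 1 / 2) (s * y1) y1 ∧
        (preD hn L).tangent q₂ = tv n (outp σ (fo k)) (k + 1 / 2) (-(s * y2)) y2 ∧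
        (preD hn L).tangent q₃ = tv n (outp σ (fo k)) (k + 1 / 2) 0 (-y3) := by
    intro k hk
    obtain ⟨tp, tq, wo, hpq, ip, iq, hwo, hp, hq, ho, hiff, hder⟩ := swap_point hn L hk (hf k hk)
    refine ⟨Sum.inl (fp k, tp), Sum.inl (fq k, tq), Sum.inl (fo k, wo), ?_, ?_, ?_, ?_, hder⟩
    · intro h
      exact hpq (congrArg Prod.fst (Sum.inl.inj h))
    · intro h
      have := congrArg Prod.snd (Sum.inl.inj h)
      simp only at this
      linarith
    · intro h
      have := congrArg Prod.snd (Sum.inl.inj h)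
      simp only at this
      linarith
    · ext x
      rcases x with ⟨j, t⟩ | ⟨j, t⟩
      · simp only [Set.mem_insert_iff, Set.mem_singleton_iff, Sum.inl.injEq]
        exact hiff j t
      · exact j.elim0
  have hmulti : ∀ x, (preD hn L).IsMultiplePoint x ↔ ∃ k ∈ L.sw, pt k = x := by
    intro x
    constructor
    · intro h
      unfold PreDiagram.IsMultiplePoint at h
      rw [Set.not_subsingleton_iff] at h
      obtain ⟨a, ha, b, hb, hab⟩ := h
      rcases a with ⟨j, t⟩ | ⟨j, t⟩
      · rcases b with ⟨j', t'⟩ | ⟨j', t'⟩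
        · have ha1 : t ∈ Ioo (0 : ℝ) 1 := ha.1
          have ha2 : arcf L j t = x := ha.2
          have hb1 : t' ∈ Ioo (0 : ℝ) 1 := hb.1
          have hb2 : arcf L j' t' = x := hb.2
          obtain ⟨k, hk, hk2⟩ := multi_swap hn L ha1 hb1 (ha2.trans hb2.symm)
            (fun e => hab (by rw [e]))
          exact ⟨k, hk, by rw [← ha2]; exact (hk2 _ _ _ (hf k hk)).symm⟩
        · exact j'.elim0
      · exact j.elim0
    · rintro ⟨k, hk, rfl⟩
      obtain ⟨q₁, q₂, q₃, h12, _, _, hP, _⟩ := hpass k hk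
      intro hsub
      rw [hP] at hsub
      exact h12 (hsub (by simp) (by simp))
  have hset : {x : Plane | (preD hn L).IsMultiplePoint x} = ((L.sw.image pt : Finset Plane) : Set Plane) := by
    ext x
    simp only [Set.mem_ofPred_eq, hmulti, Finset.coe_image, Set.mem_image, Finset.mem_coe]
  refine ⟨{ toPreDiagram := preD hn L, multiple_finite := ?_, triple := ?_,
            branches_transverse := ?_, alternating := ?_ }, ?_, ?_⟩
  · rw [hset]; exact Finset.finite_toSet _
  · intro x hx
    obtain ⟨k, hk, rfl⟩ := (hmulti x).1 hx
    obtain ⟨q₁, q₂, q₃, h12, h13, h23, hP, _⟩ := hpass k hk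
    rw [hP]
    exact Set.ncard_eq_three.2 ⟨q₁, q₂, q₃, h12, h13, h23, rfl⟩
  · intro x hx
    obtain ⟨k, hk, rfl⟩ := (hmulti x).1 hx
    obtain ⟨q₁, q₂, q₃, h12, h13, h23, hP, s, y1, y2, y3, s0, l1, l2, l3, d1, d2, d3⟩ := hpass k hk
    rw [hP]
    have m12 : 0 < s * y1 * y2 := by positivity
    have m13 : 0 < s * y1 * y3 := by positivity
    have m23 : 0 < s * y2 * y3 := by positivity
    rintro a (rfl | rfl | rfl) b (rfl | rfl | rfl) hab
    · exact absurd rfl hab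
    · rw [d1, d2]; apply tv_indep hn; nlinarith
    · rw [d1, d3]; apply tv_indep hn; nlinarith
    · rw [d1, d2]; apply tv_indep hn; nlinarith
    · exact absurd rfl hab
    · rw [d2, d3]; apply tv_indep hn; nlinarith
    · rw [d1, d3]; apply tv_indep hn; nlinarith
    · rw [d2, d3]; apply tv_indep hn; nlinarith
    · exact absurd rfl hab
  · intro x hx
    obtain ⟨k, hk, rfl⟩ := (hmulti x).1 hx
    obtain ⟨q₁, q₂, q₃, h12, h13, h23, hP, s, y1, y2, y3, s0, l1, l2, l3, d1, d2, d3⟩ := hpass k hk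
    refine ⟨q₁, q₂, q₃, hP, 1 / y1, 1 / y2, 2 / y3, by positivity, by positivity, by positivity, ?_⟩
    rw [d1, d2, d3, tv_lin]
    have := tv_lin n (outp σ (fo k)) (k + 1 / 2) (1 / y1 * (s * y1) + 1 / y2 * (-(s * y2)))
      (1 / y1 * y1 + 1 / y2 * y2) 0 (-y3) 1 (2 / y3)
    rw [one_smul] at this
    rw [this, ← tv_self n (outp σ (fo k)) (k + 1 / 2)]
    congr 1 <;> field_simp <;> ring
  · intro i
    constructor
    · show arcf L i 0 = _
      rw [arcf, xf_zero, yf_zero, Em, bpoint]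
      simp
    · show arcf L i 1 = _
      rw [arcf, xf_one, yf_one, Em, bpoint]
      simp [outp]
  · unfold TripleDiagram.tripleCount
    rw [hset, Set.ncard_coe_finset, Finset.card_image_of_injective _ hinj, L.card_sw]

end triple
/-- **Theorem (standard diagrams and their crossing count).** For every `n ≥ 1` and every
bijection `σ : Fin n → Fin n`, there is a triple diagram without closed strands realizing
`σ` whose number of triple points is exactly `N(σ)`. -/
theorem triple_diagram_exists_with_Ncross_crossings (n : ℕ) (hn : 1 ≤ n)
    (σ : Equiv.Perm (Fin n)) :
    ∃ D : TripleDiagram n 0, Realizes D σ ∧ D.tripleCount = Ncross n σ := by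
  obtain ⟨L⟩ := plan_exists (sched_main σ)
  exact triple_main hn L
end
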